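/- The entire function Z₂(s) has no zero in the region 1/2 < Re(s) < 20, |Im(s)| ≥ 36; that is, for every complex s with 1/2 < Re(s) < 20 and |Im(s)| ≥ 36 one has Z₂(s) ≠ 0. -/

import Mathlib

open Complex

noncomputable def chi (s : ℂ) : ℂ := s * (s - 1) * completedRiemannZeta₀ s + 1

noncomputable def A : ℂ := Real.pi / 3 - 1

noncomputable def f1 (s : ℂ) : ℂ :=
  (s - 1) * ((s - 1) * (3 * s - 2) * (A * s - A + 1) * chi (s + 1) * chi (3 * s)
    - (s + 1) * (s - 2) * chi s * chi (3 * s - 1)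
    - 2 * (s - 1) * (s - 2) * chi s * chi (3 * s))

noncomputable def f2 (s : ℂ) : ℂ :=
  (s - 2) * ((A * s + 3) * (s - 1) ^ 2 * chi (s + 2)
    - 2 * (s - 1) * (s - 3) * chi (s + 1)
    - (s + 2) * (s - 3) * chi s)

noncomputable def Z1 (s : ℂ) : ℂ := chi (2 * s) * f1 s - chi (2 * s - 1) * f1 (1 - s)

noncomputable def Z2 (s : ℂ) : ℂ := chi (2 * s) * f2 s - chi (2 * s - 1) * f2 (1 - s)

theorem chi_one_sub (s : ℂ) : chi (1 - s) = chi s := by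
  unfold chi; rw [completedRiemannZeta₀_one_sub]; ring

theorem chi_differentiable : Differentiable ℂ chi := by
  have := differentiable_completedZeta₀
  unfold chi; fun_prop

theorem chi_one : chi 1 = 1 := by simp [chi]

theorem chi_eq {s : ℂ} (h0 : 0 < s.re) (h1 : s ≠ 1) :
    chi s = s * (s - 1) * (Gammaℝ s * riemannZeta s) := by
  have hs : s ≠ 0 := by rintro rfl; simp at h0
  have hG : Gammaℝ s ≠ 0 := Gammaℝ_ne_zero_of_re_pos h0
  have h1' : (1 : ℂ) - s ≠ 0 := sub_ne_zero.mpr h1.symm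
  rw [riemannZeta_def_of_ne_zero hs, mul_div_cancel₀ _ hG, completedRiemannZeta_eq, chi]
  field_simp
  ring

theorem chi_ne_zero {s : ℂ} (h : 1 ≤ s.re) : chi s ≠ 0 := by
  by_cases h1 : s = 1
  · subst h1; simp [chi_one]
  · rw [chi_eq (by linarith) h1]
    have hs : s ≠ 0 := by rintro rfl; norm_num at h
    have := riemannZeta_ne_zero_of_one_le_re h
    have := Gammaℝ_ne_zero_of_re_pos (s := s) (by linarith)
    have := sub_ne_zero.mpr h1
    positivity

theorem Gammaℝ_conj' (s : ℂ) : Gammaℝ ((starRingEnd ℂ) s) = (starRingEnd ℂ) (Gammaℝ s) := by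
  rw [Gammaℝ_def, Gammaℝ_def, map_mul, ← Gamma_conj]
  congr 1
  · have : (-(starRingEnd ℂ) s / 2) = (starRingEnd ℂ) (-s / 2) := by simp [map_div₀, map_ofNat]
    rw [this, cpow_conj, conj_ofReal]
    · rw [arg_ofReal_of_nonneg Real.pi_pos.le]; exact Real.pi_pos.ne
  · congr 1; simp [map_div₀, map_ofNat]

theorem chi_conj {s : ℂ} (h0 : 0 < s.re) :
    chi ((starRingEnd ℂ) s) = (starRingEnd ℂ) (chi s) := by
  by_cases h1 : s = 1
  · subst h1; simp [chi_one]
  · have h2 : (starRingEnd ℂ) s ≠ 1 := by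
      intro h; apply h1; have := congrArg (starRingEnd ℂ) h; simpa using this
    rw [chi_eq h0 h1, chi_eq (by simpa using h0) h2, Gammaℝ_conj', riemannZeta_conj]
    simp

/-- Beta bound -/
theorem gamma_ratio_le {z : ℂ} (hz : 0 < z.re) {y : ℝ} (hy : 0 < y) :
    ‖Gamma z‖ * Real.Gamma (z.re + y) ≤ Real.Gamma z.re * ‖Gamma (z + y)‖ := by
  have hy' : 0 < (y : ℂ).re := by simpa using hy
  have h1 := Gamma_mul_Gamma_eq_betaIntegral hz hy'
  have hzr : 0 < ((z.re : ℝ) : ℂ).re := by simpa using hz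
  have h2 := Gamma_mul_Gamma_eq_betaIntegral hzr hy'
  have hle : ‖betaIntegral z y‖ ≤ ‖betaIntegral (z.re : ℝ) y‖ := by
    have e : betaIntegral (z.re : ℝ) y =
        ((∫ x in (0 : ℝ)..1, x ^ (z.re - 1) * (1 - x) ^ (y - 1) : ℝ) : ℂ) := by
      rw [betaIntegral, ← intervalIntegral.integral_ofReal]
      refine intervalIntegral.integral_congr ?_
      intro x hx
      rw [Set.uIcc_of_le zero_le_one] at hx
      simp only
      push_cast
      rw [ofReal_cpow hx.1, ofReal_cpow (by linarith [hx.2])]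
      push_cast; rfl
    rw [e, norm_real]
    refine le_trans ?_ (le_abs_self _)
    rw [betaIntegral]
    refine (intervalIntegral.norm_integral_le_integral_norm zero_le_one).trans ?_
    refine le_of_eq ?_
    rw [intervalIntegral.integral_of_le zero_le_one, intervalIntegral.integral_of_le zero_le_one,
      MeasureTheory.integral_Ioc_eq_integral_Ioo, MeasureTheory.integral_Ioc_eq_integral_Ioo]
    refine MeasureTheory.setIntegral_congr_fun measurableSet_Ioo ?_
    intro x hx
    have hx1 : 0 < 1 - x := by linarith [hx.2]
    simp only [norm_mul]
    rw [norm_cpow_eq_rpow_re_of_pos hx.1, show (1 : ℂ) - x = ((1 - x : ℝ) : ℂ) by push_cast; rfl,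
      norm_cpow_eq_rpow_re_of_pos hx1]
    simp
  have n1 := congrArg norm h1
  have n2 := congrArg norm h2
  rw [← ofReal_add] at n2
  simp only [Complex.Gamma_ofReal, norm_mul, norm_real] at n1 n2
  have gz := Real.Gamma_pos_of_pos hz
  have gy := Real.Gamma_pos_of_pos hy
  have gzy := Real.Gamma_pos_of_pos (add_pos hz hy)
  rw [Real.norm_of_nonneg gy.le] at n1 n2
  rw [Real.norm_of_nonneg gz.le, Real.norm_of_nonneg gzy.le] at n2
  have h3 : 0 ≤ ‖Gamma (z + y)‖ := norm_nonneg _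
  have : (‖Gamma z‖ * Real.Gamma (z.re + y)) * Real.Gamma y ≤
      (Real.Gamma z.re * ‖Gamma (z + y)‖) * Real.Gamma y := by
    calc _ = (‖Gamma z‖ * Real.Gamma y) * Real.Gamma (z.re + y) := by ring
      _ = ‖Gamma (z + y)‖ * ‖betaIntegral z y‖ * Real.Gamma (z.re + y) := by rw [n1]
      _ ≤ ‖Gamma (z + y)‖ * ‖betaIntegral (z.re : ℝ) y‖ * Real.Gamma (z.re + y) := by gcongr
      _ = ‖Gamma (z + y)‖ * (Real.Gamma (z.re + y) * ‖betaIntegral (z.re : ℝ) y‖) := by ring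
      _ = _ := by rw [← n2]; ring
  exact le_of_mul_le_mul_right this gy

theorem norm_Gamma_half (b : ℝ) : Real.pi * Real.exp (-(Real.pi * |b|)) ≤
    ‖Gamma (1 / 2 + b * I)‖ ^ 2 := by
  have h := Gamma_mul_Gamma_one_sub (1 / 2 + b * I)
  have e : (1 : ℂ) - (1 / 2 + b * I) = (starRingEnd ℂ) (1 / 2 + b * I) := by
    apply Complex.ext <;> simp <;> norm_num
  rw [e, Gamma_conj] at h
  have h' := congrArg norm h
  rw [norm_mul, norm_conj, ← sq, norm_div, norm_real, Real.norm_of_nonneg Real.pi_pos.le] at h'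
  rw [h']
  have e2 : sin (Real.pi * (1 / 2 + b * I)) = ((Real.cosh (Real.pi * b) : ℝ) : ℂ) := by
    rw [mul_add, show (Real.pi : ℂ) * (1 / 2) = Real.pi / 2 by ring, add_comm, sin_add_pi_div_two,
      ← mul_assoc, cos_mul_I]
    push_cast; rfl
  rw [e2, norm_real, Real.norm_of_nonneg (Real.cosh_pos _).le, Real.exp_neg, div_eq_mul_inv]
  have : Real.cosh (Real.pi * b) ≤ Real.exp (Real.pi * |b|) := by
    rw [← Real.cosh_abs, abs_mul, abs_of_pos Real.pi_pos, Real.cosh_eq]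
    have : Real.exp (-(Real.pi * |b|)) ≤ Real.exp (Real.pi * |b|) := by
      apply Real.exp_le_exp.mpr
      have := mul_nonneg Real.pi_pos.le (abs_nonneg b)
      linarith
    linarith
  have := Real.cosh_pos (Real.pi * b)
  have := Real.pi_pos
  gcongr

theorem norm_Gamma_lower {z : ℂ} (hz : 1 / 2 ≤ z.re) :
    Real.Gamma z.re * Real.exp (-(Real.pi * |z.im|)) ≤ ‖Gamma z‖ := by
  have key : Real.sqrt Real.pi * Real.exp (-(Real.pi * |z.im|)) ≤ ‖Gamma (1 / 2 + z.im * I)‖ := by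
    have h := norm_Gamma_half z.im
    apply le_of_sq_le_sq _ (norm_nonneg _)
    rw [mul_pow, Real.sq_sqrt Real.pi_pos.le]
    refine le_trans ?_ h
    have := Real.pi_pos
    gcongr
    rw [← Real.exp_nat_mul]
    apply Real.exp_le_exp.mpr
    have := mul_nonneg Real.pi_pos.le (abs_nonneg z.im)
    push_cast; linarith
  have hsp : 0 < Real.sqrt Real.pi := Real.sqrt_pos.mpr Real.pi_pos
  rcases hz.eq_or_lt with h | h
  · have e : (1 / 2 + z.im * I : ℂ) = z := by apply Complex.ext <;> simp [← h]
    rw [e] at key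
    rw [← h, Real.Gamma_one_half_eq]; exact key
  · have h2 := gamma_ratio_le (z := 1 / 2 + z.im * I) (by simp) (y := z.re - 1 / 2) (by linarith)
    have e : (1 / 2 + z.im * I + ((z.re - 1 / 2 : ℝ) : ℂ) : ℂ) = z := by
      apply Complex.ext <;> simp
    have e2 : (1 / 2 + z.im * I : ℂ).re = 1 / 2 := by simp
    rw [e, e2, Real.Gamma_one_half_eq, show (1 / 2 : ℝ) + (z.re - 1 / 2) = z.re by ring] at h2
    have g := Real.Gamma_pos_of_pos (show 0 < z.re by linarith)
    have : Real.sqrt Real.pi * (Real.Gamma z.re * Real.exp (-(Real.pi * |z.im|))) ≤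
        Real.sqrt Real.pi * ‖Gamma z‖ := by
      refine le_trans ?_ h2
      calc _ = (Real.sqrt Real.pi * Real.exp (-(Real.pi * |z.im|))) * Real.Gamma z.re := by ring
        _ ≤ _ := by gcongr
    exact le_of_mul_le_mul_left this hsp

theorem Λ₀_strip (a : ℝ) : ∃ K : ℝ, 0 ≤ K ∧ ∀ z : ℂ, |z.re| ≤ a → ‖completedRiemannZeta₀ z‖ ≤ K := by
  set P := HurwitzZeta.hurwitzEvenFEPair 0 with hP
  have hm : ∀ s : ℂ, MellinConvergent P.f_modif s := fun s =>
    (P.isStrongFEPair_toStrongFEPair.hasMellin s).1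
  have hn : ∀ (s : ℂ) (t : ℝ), t ∈ Set.Ioi (0 : ℝ) →
      ‖(t : ℂ) ^ (s - 1) • P.f_modif t‖ = t ^ (s.re - 1) * ‖P.f_modif t‖ := by
    intro s t ht
    rw [norm_smul, norm_cpow_eq_rpow_re_of_pos ht]; simp
  have hi : ∀ x : ℝ, MeasureTheory.IntegrableOn (fun t : ℝ => t ^ (x - 1) * ‖P.f_modif t‖)
      (Set.Ioi 0) := by
    intro x
    have := (hm x).norm
    refine MeasureTheory.IntegrableOn.congr_fun this ?_ measurableSet_Ioi
    intro t ht
    simpa using hn x t ht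
  have hnn : ∀ x : ℝ, 0 ≤ ∫ t in Set.Ioi (0 : ℝ), t ^ (x - 1) * ‖P.f_modif t‖ := by
    intro x
    refine MeasureTheory.setIntegral_nonneg measurableSet_Ioi ?_
    intro t ht
    exact mul_nonneg (Real.rpow_nonneg (le_of_lt ht) _) (norm_nonneg _)
  refine ⟨(∫ t in Set.Ioi (0 : ℝ), t ^ (-a - 1) * ‖P.f_modif t‖) +
    ∫ t in Set.Ioi (0 : ℝ), t ^ (a - 1) * ‖P.f_modif t‖, add_nonneg (hnn _) (hnn _), ?_⟩
  intro z hz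
  have e : completedRiemannZeta₀ z = mellin P.f_modif (z / 2) / 2 := rfl
  rw [e, norm_div]
  have h1 : ‖mellin P.f_modif (z / 2)‖ ≤ (∫ t in Set.Ioi (0 : ℝ), t ^ (-a - 1) * ‖P.f_modif t‖) +
    ∫ t in Set.Ioi (0 : ℝ), t ^ (a - 1) * ‖P.f_modif t‖ := by
    rw [mellin, ← MeasureTheory.integral_add (hi _) (hi _)]
    refine (MeasureTheory.norm_integral_le_integral_norm _).trans ?_
    refine MeasureTheory.setIntegral_mono_on (hm _).norm ((hi _).add (hi _)) measurableSet_Ioi ?_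
    intro t ht
    have ht0 : (0 : ℝ) < t := ht
    rw [hn _ _ ht, ← add_mul]
    have hz2 : (z / 2).re = z.re / 2 := by simp
    rw [hz2]
    obtain ⟨h3, h4⟩ := abs_le.mp hz
    refine mul_le_mul_of_nonneg_right ?_ (norm_nonneg _)
    rcases le_total 1 t with h | h
    · have := Real.rpow_le_rpow_of_exponent_le h (show z.re / 2 - 1 ≤ a - 1 by linarith)
      have := Real.rpow_nonneg ht0.le (-a - 1)
      linarith
    · have := Real.rpow_le_rpow_of_exponent_ge ht0 h (show -a - 1 ≤ z.re / 2 - 1 by linarith)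
      have := Real.rpow_nonneg ht0.le (a - 1)
      linarith
  have h2 := norm_nonneg (mellin P.f_modif (z / 2))
  simp only [Complex.norm_ofNat]
  linarith

theorem Lnorm (f : ℕ → ℂ) (g : ℕ → ℝ) (hfg : ∀ n, ‖f n‖ ≤ g n) (s : ℂ) (x : ℝ) (hx : x ≤ s.re)
    (hsum : LSeriesSummable (fun n => (g n : ℂ)) x) :
    ‖LSeries f s‖ ≤ ‖LSeries (fun n => (g n : ℂ)) x‖ := by
  have hg : ∀ n, 0 ≤ g n := fun n => (norm_nonneg _).trans (hfg n)
  have ht : ∀ n, LSeries.term (fun n => (g n : ℂ)) x n =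
      ((‖LSeries.term (fun n => (g n : ℂ)) x n‖ : ℝ) : ℂ) := by
    intro n
    rcases eq_or_ne n 0 with rfl | hn
    · simp
    · rw [LSeries.norm_term_eq, if_neg hn, LSeries.term_of_ne_zero hn]
      rw [ofReal_re, norm_real, Real.norm_of_nonneg (hg n)]
      push_cast
      rw [ofReal_cpow (Nat.cast_nonneg n)]
      simp
  have e : LSeries (fun n => (g n : ℂ)) x =
      ((∑' n, ‖LSeries.term (fun n => (g n : ℂ)) x n‖ : ℝ) : ℂ) := by
    rw [LSeries, ofReal_tsum]
    exact tsum_congr ht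
  have hle : ∀ n, ‖LSeries.term f s n‖ ≤ ‖LSeries.term (fun n => (g n : ℂ)) x n‖ := by
    intro n
    rw [LSeries.norm_term_eq, LSeries.norm_term_eq]
    split_ifs with hn
    · rfl
    · rw [norm_real, Real.norm_of_nonneg (hg n), ofReal_re]
      have h1 : (1 : ℝ) ≤ n := by exact_mod_cast Nat.one_le_iff_ne_zero.mpr hn
      have := hg n
      have h2 : (0 : ℝ) < n ^ x := Real.rpow_pos_of_pos (by linarith) _
      have h3 := Real.rpow_le_rpow_of_exponent_le h1 hx
      have := hfg n
      gcongr
  rw [e, norm_real, Real.norm_of_nonneg (tsum_nonneg fun n => norm_nonneg _)]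
  exact tsum_of_norm_bounded hsum.norm.hasSum hle

theorem zeta_upper {s : ℂ} {x : ℝ} (h1 : 1 < x) (hx : x ≤ s.re) :
    ‖riemannZeta s‖ ≤ ‖riemannZeta x‖ := by
  have e : (fun n : ℕ => (((1 : ℝ) : ℝ) : ℂ)) = (1 : ℕ → ℂ) := by ext; simp
  have := Lnorm 1 (fun _ => 1) (by simp) s x hx (by
    rw [e]; exact LSeriesSummable_one_iff.mpr (by simpa using h1))
  rw [e, LSeries_one_eq_riemannZeta (by linarith), LSeries_one_eq_riemannZeta (by simpa using h1)]
    at this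
  exact this

theorem zeta_lower {s : ℂ} {x : ℝ} (h1 : 1 < x) (hx : x ≤ s.re) :
    1 ≤ ‖riemannZeta s‖ * ‖riemannZeta x‖ := by
  have e : (fun n : ℕ => (((1 : ℝ) : ℝ) : ℂ)) = (1 : ℕ → ℂ) := by ext; simp
  have := Lnorm (fun n => (ArithmeticFunction.moebius n : ℂ)) (fun _ => 1) (by
    intro n
    have := ArithmeticFunction.abs_moebius_le_one (n := n)
    rw [Complex.norm_intCast]
    exact_mod_cast this) s x hx (by
    rw [e]; exact LSeriesSummable_one_iff.mpr (by simpa using h1))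
  rw [e, LSeries_one_eq_riemannZeta (s := x) (by simpa using h1)] at this
  have h2 := LSeries_one_mul_Lseries_moebius (s := s) (by linarith)
  rw [LSeries_one_eq_riemannZeta (by linarith)] at h2
  have h3 := congrArg norm h2
  rw [norm_mul, norm_one] at h3
  rw [← h3]
  gcongr

theorem zeta_ratio {s : ℂ} {x : ℝ} (h1 : 1 < x) (hx : x ≤ s.re) :
    ‖riemannZeta s‖ * ‖riemannZeta (x + 1)‖ ≤ ‖riemannZeta x‖ * ‖riemannZeta (s + 1)‖ := by
  set φ : ℕ → ℂ := fun n => ((Nat.totient n : ℝ) : ℂ) with hφ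
  have hs : ∀ s : ℂ, 1 < s.re → LSeriesSummable φ (s + 1) := by
    intro s hs
    refine LSeriesSummable_of_le_const_mul_rpow (x := 2) (by simp; linarith) ⟨1, ?_⟩
    intro n hn
    simp only [hφ, norm_real, Real.norm_natCast, one_mul]
    norm_num
    exact Nat.totient_le n
  have key : ∀ s : ℂ, 1 < s.re → LSeries φ (s + 1) * riemannZeta (s + 1) = riemannZeta s := by
    intro s h
    have h2 : 1 < (s + 1).re := by simp; linarith
    rw [← LSeries_one_eq_riemannZeta h2, ← LSeries_one_eq_riemannZeta h,
      ← LSeries_convolution' (hs s h) (LSeriesSummable_one_iff.mpr h2)]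
    unfold LSeries
    refine tsum_congr ?_
    intro n
    rcases eq_or_ne n 0 with rfl | hn
    · simp
    rw [LSeries.term_of_ne_zero hn, LSeries.term_of_ne_zero hn, LSeries.convolution_def]
    have hsum : ∑ p ∈ n.divisorsAntidiagonal, φ p.1 * (1 : ℕ → ℂ) p.2 = n := by
      simp only [Pi.one_apply, mul_one]
      rw [Nat.sum_divisorsAntidiagonal (fun i _ => φ i)]
      have := Nat.sum_totient n
      simp only [hφ]
      exact_mod_cast this
    simp only at hsum ⊢
    have hn' : (n : ℂ) ≠ 0 := by exact_mod_cast hn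
    rw [hsum, cpow_add _ _ hn', cpow_one, Pi.one_apply]
    have : (n : ℂ) ^ s ≠ 0 := by simp [cpow_eq_zero_iff, hn']
    field_simp
  have hxr : 1 < (x : ℂ).re := by simpa using h1
  have hL := Lnorm φ (fun n => (Nat.totient n : ℝ)) (by intro n; simp [hφ]) (s + 1) (x + 1)
    (by simp; linarith) (by have := hs x hxr; push_cast; exact this)
  have k1 := congrArg norm (key s (by linarith))
  have k2 := congrArg norm (key x hxr)
  rw [norm_mul] at k1 k2
  rw [← k1, ← k2]
  push_cast at hL
  have : ‖LSeries φ (s + 1)‖ ≤ ‖LSeries φ (x + 1)‖ := by simpa [hφ] using hL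
  calc _ = ‖LSeries φ (s + 1)‖ * (‖riemannZeta (s + 1)‖ * ‖riemannZeta (x + 1)‖) := by ring
    _ ≤ ‖LSeries φ (x + 1)‖ * (‖riemannZeta (s + 1)‖ * ‖riemannZeta (x + 1)‖) := by gcongr
    _ = _ := by ring

theorem halfdisc {g : ℂ → ℂ} {R M : ℝ} (hR : 0 < R) {a b : ℕ} (hM : 1 ≤ M)
    (hd : ∀ w : ℂ, 0 ≤ w.re → ‖w‖ ≤ R → DifferentiableAt ℂ g w)
    (h0 : ∀ w : ℂ, w.re = 0 → ‖w‖ ≤ R → ‖g w‖ ≤ 1)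
    (h1 : ∀ w : ℂ, 0 < w.re → ‖w‖ = R → ‖g w‖ ^ a * (2 * w.re / R) ^ b ≤ M) :
    ∀ w : ℂ, 0 ≤ w.re → ‖w‖ ≤ R → ‖g w‖ ^ a * ‖1 + w ^ 2 / R ^ 2‖ ^ b ≤ M := by
  set U : Set ℂ := {w | 0 < w.re} ∩ Metric.ball 0 R with hU
  set V : Set ℂ := {w | 0 ≤ w.re} ∩ Metric.closedBall 0 R with hV
  have hUo : IsOpen U := (isOpen_lt continuous_const continuous_re).inter Metric.isOpen_ball
  have hVc : IsClosed V := (isClosed_le continuous_const continuous_re).inter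
    Metric.isClosed_closedBall
  have hUV : U ⊆ V := fun w hw => ⟨le_of_lt (show 0 < w.re from hw.1), Metric.ball_subset_closedBall hw.2⟩
  have hcl : closure U ⊆ V := closure_minimal hUV hVc
  have hRc : (R : ℂ) ≠ 0 := by exact_mod_cast hR.ne'
  set F : ℂ → ℂ := fun w => g w ^ a * (1 + w ^ 2 / R ^ 2) ^ b with hF
  have hFd : ∀ w ∈ V, DifferentiableAt ℂ F w := by
    intro w hw
    have := hd w hw.1 (by simpa using hw.2)
    fun_prop
  have hFdc : DiffContOnCl ℂ F U :=
    DifferentiableOn.diffContOnCl fun w hw => (hFd w (hcl hw)).differentiableWithinAt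
  have hbd : Bornology.IsBounded U := Metric.isBounded_ball.subset Set.inter_subset_right
  have him : ∀ w : ℂ, w.re = 0 → ‖w‖ ≤ R → ‖F w‖ ≤ M := by
    intro w hw hwR
    have e : (1 + w ^ 2 / R ^ 2 : ℂ) = ((1 - w.im ^ 2 / R ^ 2 : ℝ) : ℂ) := by
      have : w = w.im * I := by apply Complex.ext <;> simp [hw]
      conv_lhs => rw [this, mul_pow, I_sq]
      push_cast; ring
    have hq : w.im ^ 2 / R ^ 2 ≤ 1 := by
      rw [div_le_one (by positivity)]
      have := (abs_im_le_norm w).trans hwR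
      rw [← sq_abs]; gcongr
    have hq0 : 0 ≤ w.im ^ 2 / R ^ 2 := by positivity
    rw [hF]; simp only [norm_mul, norm_pow]
    rw [e, norm_real, Real.norm_of_nonneg (by linarith)]
    have := pow_le_one₀ (n := a) (norm_nonneg _) (h0 w hw hwR)
    have h3 := pow_le_one₀ (n := b) (show 0 ≤ 1 - w.im ^ 2 / R ^ 2 by linarith) (by linarith)
    have := mul_le_one₀ this (pow_nonneg (show 0 ≤ 1 - w.im ^ 2 / R ^ 2 by linarith) b) h3
    linarith
  have harc : ∀ w : ℂ, 0 < w.re → ‖w‖ = R → ‖F w‖ ≤ M := by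
    intro w hw hwR
    have e : (1 + w ^ 2 / R ^ 2 : ℂ) = w * ((2 * w.re / R ^ 2 : ℝ) : ℂ) := by
      have h2 : (R : ℂ) ^ 2 = w * (starRingEnd ℂ) w := by
        rw [mul_conj, normSq_eq_norm_sq, hwR]; push_cast; rfl
      have h3 : w + (starRingEnd ℂ) w = ((2 * w.re : ℝ) : ℂ) := add_conj w
      rw [ofReal_div, ← h3]
      push_cast
      field_simp
      rw [h2]; ring
    rw [hF]; simp only [norm_mul, norm_pow]
    rw [e, norm_mul, hwR, norm_real, Real.norm_of_nonneg (by positivity),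
      show R * (2 * w.re / R ^ 2) = 2 * w.re / R by field_simp]
    exact h1 w hw hwR
  have hfr : ∀ w ∈ frontier U, ‖F w‖ ≤ M := by
    intro w hw
    rw [hUo.frontier_eq] at hw
    have hwV := hcl hw.1
    have hwR : ‖w‖ ≤ R := by simpa using hwV.2
    rcases (show 0 ≤ w.re from hwV.1).eq_or_lt with h | h
    · exact him w h.symm hwR
    · refine harc w h (le_antisymm hwR ?_)
      by_contra hc
      exact hw.2 ⟨h, by simpa using hc⟩
  intro w hw hwR
  have : ‖F w‖ ≤ M := by
    rcases hw.eq_or_lt with h | h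
    · exact him w h.symm hwR
    rcases hwR.eq_or_lt with h' | h'
    · exact harc w h h'
    exact Complex.norm_le_of_forall_mem_frontier_norm_le hbd hFdc hfr
      (subset_closure ⟨h, by simpa using h'⟩)
  simpa [hF] using this

theorem norm_Gammaℝ {z : ℂ} : ‖Gammaℝ z‖ = Real.pi ^ (-z.re / 2) * ‖Gamma (z / 2)‖ := by
  rw [Gammaℝ_def, norm_mul, norm_cpow_eq_rpow_re_of_pos Real.pi_pos]
  simp

theorem norm_mono {z z' : ℂ} (h : z'.im = z.im) (h2 : |z'.re| ≤ |z.re|) : ‖z'‖ ≤ ‖z‖ := by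
  apply le_of_sq_le_sq _ (norm_nonneg _)
  rw [← normSq_eq_norm_sq, ← normSq_eq_norm_sq, normSq_apply, normSq_apply, h]
  have := sq_le_sq.mpr h2
  nlinarith

theorem chi_far {c : ℝ} (hc : 1 ≤ c) : ∃ K : ℝ, 0 ≤ K ∧ ∀ w : ℂ, c + 3 ≤ w.re →
    ‖chi (c - w)‖ ≤ K * ‖chi (c + w)‖ := by
  refine ⟨Real.pi ^ (c - 1 / 2) * ‖riemannZeta (2 : ℝ)‖ ^ 2, by
    have := Real.pi_pos; positivity, ?_⟩
  intro w hw
  have e : chi (c - w) = chi (1 - c + w) := by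
    rw [← chi_one_sub]; congr 1; ring
  rw [e]
  set z : ℂ := c + w with hz
  set z' : ℂ := 1 - c + w with hz'
  have hzr : z.re = c + w.re := by simp [hz]
  have hzr' : z'.re = 1 - c + w.re := by simp [hz']
  have hzi : z.im = w.im := by simp [hz]
  have hzi' : z'.im = w.im := by simp [hz']
  have hz1 : z ≠ 1 := by intro h; rw [h] at hzr; simp at hzr; linarith
  have hz1' : z' ≠ 1 := by intro h; rw [h] at hzr'; simp at hzr'; linarith
  rw [chi_eq (by linarith) hz1, chi_eq (by linarith) hz1']
  simp only [norm_mul, norm_Gammaℝ]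
  have n1 : ‖z'‖ ≤ ‖z‖ := norm_mono (by rw [hzi, hzi']) (by
    rw [abs_of_nonneg (by linarith), abs_of_nonneg (by linarith)]; linarith)
  have n2 : ‖z' - 1‖ ≤ ‖z - 1‖ := norm_mono (by simp [hzi, hzi']) (by
    rw [abs_of_nonneg (by simp; linarith), abs_of_nonneg (by simp; linarith)]; simp; linarith)
  have n3 : ‖Gamma (z' / 2)‖ ≤ ‖Gamma (z / 2)‖ := by
    have hr : (z' / 2).re = z'.re / 2 := by simp
    have h := gamma_ratio_le (z := z' / 2) (by rw [hr]; linarith) (y := c - 1 / 2) (by linarith)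
    have e : z' / 2 + ((c - 1 / 2 : ℝ) : ℂ) = z / 2 := by
      rw [hz, hz']; push_cast; ring
    rw [e, hr] at h
    have hm : Real.Gamma (z'.re / 2) ≤ Real.Gamma (z'.re / 2 + (c - 1 / 2)) := by
      apply Real.Gamma_strictMonoOn_Ici.monotoneOn
      · simp only [Set.mem_Ici]; linarith
      · simp only [Set.mem_Ici]; linarith
      · linarith
    have hp : 0 < Real.Gamma (z'.re / 2) := Real.Gamma_pos_of_pos (by linarith)
    have h0 := norm_nonneg (Gamma (z' / 2))
    have : Real.Gamma (z'.re / 2) * ‖Gamma (z' / 2)‖ ≤ Real.Gamma (z'.re / 2) * ‖Gamma (z / 2)‖ := by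
      nlinarith
    exact le_of_mul_le_mul_left this hp
  have n4 : Real.pi ^ (-z'.re / 2) = Real.pi ^ (c - 1 / 2) * Real.pi ^ (-z.re / 2) := by
    rw [← Real.rpow_add Real.pi_pos]; congr 1; rw [hzr, hzr']; ring
  have n5 : ‖riemannZeta z'‖ ≤ ‖riemannZeta (2 : ℝ)‖ ^ 2 * ‖riemannZeta z‖ := by
    have h1 := zeta_upper (s := z') (x := 2) (by norm_num) (by linarith)
    have h2 := zeta_lower (s := z) (x := 2) (by norm_num) (by linarith)
    have h0 := norm_nonneg (riemannZeta (2 : ℝ))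
    nlinarith
  rw [n4]
  have := Real.pi_pos
  calc _ ≤ ‖z‖ * ‖z - 1‖ * (Real.pi ^ (c - 1 / 2) * Real.pi ^ (-z.re / 2) * ‖Gamma (z / 2)‖ *
        (‖riemannZeta (2 : ℝ)‖ ^ 2 * ‖riemannZeta z‖)) := by gcongr
    _ = _ := by ring

theorem chi_near {c : ℝ} (hc : 1 ≤ c) : ∃ K : ℝ, 0 ≤ K ∧ ∀ w : ℂ, 0 < w.re → w.re ≤ c + 3 →
    ‖chi (c - w)‖ * w.re ^ 2 ≤ K * Real.exp (6 * ‖w‖) * ‖chi (c + w)‖ := by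
  obtain ⟨K1, hK1, hK1'⟩ := Λ₀_strip (c + 3)
  have hcont : ContinuousOn (fun r : ℝ => ‖chi r‖ / ‖Gammaℝ r‖ ^ 2) (Set.Icc 1 (2 * c + 3)) := by
    apply ContinuousOn.div
    · exact (chi_differentiable.continuous.comp continuous_ofReal).norm.continuousOn
    · apply ContinuousOn.pow
      apply ContinuousOn.norm
      intro r hr
      have hr1 : (1 : ℝ) ≤ r := hr.1
      have hi : Continuous (fun s : ℂ => (Gammaℝ s)⁻¹) := differentiable_Gammaℝ_inv.continuous
      have hne : (Gammaℝ (r : ℂ))⁻¹ ≠ 0 :=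
        inv_ne_zero (Gammaℝ_ne_zero_of_re_pos (by simp; linarith))
      have h2 := (hi.comp continuous_ofReal).continuousAt (x := r)
      have h3 := h2.inv₀ hne
      have h4 : ((fun s : ℂ => (Gammaℝ s)⁻¹) ∘ ofReal)⁻¹ = fun x : ℝ => Gammaℝ (x : ℂ) := by
        ext x; simp
      rw [h4] at h3
      exact h3.continuousWithinAt
    · intro r hr
      have hr1 : (1 : ℝ) ≤ r := hr.1
      have := Gammaℝ_ne_zero_of_re_pos (s := r) (by simp; linarith)
      positivity
  obtain ⟨K2, hK2⟩ := isCompact_Icc.exists_bound_of_continuousOn hcont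
  have hK2nn : 0 ≤ K2 := (norm_nonneg _).trans (hK2 1 ⟨le_refl _, by linarith⟩)
  refine ⟨((c + 1) ^ 2 * K1 + 1) * K2, by positivity, ?_⟩
  intro w hw0 hw1
  have hw := norm_nonneg w
  have hup : ‖chi (c - w)‖ ≤ ((c + 1) ^ 2 * K1 + 1) * Real.exp (2 * ‖w‖) := by
    have hL := hK1' (c - w) (by simp; rw [abs_le]; constructor <;> linarith)
    have hE : ‖w‖ + 1 ≤ Real.exp ‖w‖ := Real.add_one_le_exp _
    have n1 : ‖(c : ℂ) - w‖ ≤ (c + 1) * Real.exp ‖w‖ := by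
      have := norm_sub_le (c : ℂ) w
      rw [norm_real, Real.norm_of_nonneg (by linarith)] at this
      nlinarith
    have n2 : ‖(c : ℂ) - w - 1‖ ≤ (c + 1) * Real.exp ‖w‖ := by
      have := norm_sub_le ((c : ℂ) - 1) w
      rw [show (c : ℂ) - 1 = ((c - 1 : ℝ) : ℂ) by push_cast; rfl, norm_real,
        Real.norm_of_nonneg (by linarith)] at this
      rw [show (c : ℂ) - w - 1 = ((c - 1 : ℝ) : ℂ) - w by push_cast; ring]
      nlinarith
    have e2 : Real.exp (2 * ‖w‖) = Real.exp ‖w‖ * Real.exp ‖w‖ := by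
      rw [← Real.exp_add]; congr 1; ring
    unfold chi
    refine (norm_add_le _ _).trans ?_
    rw [norm_mul, norm_mul, norm_one, e2]
    have h1 : 1 ≤ Real.exp ‖w‖ := by linarith
    calc _ ≤ (c + 1) * Real.exp ‖w‖ * ((c + 1) * Real.exp ‖w‖) * K1 +
          Real.exp ‖w‖ * Real.exp ‖w‖ := by
          gcongr
          nlinarith
      _ = _ := by ring
  set z : ℂ := c + w with hz
  set r : ℝ := c + w.re with hr
  have hzr : z.re = r := by simp [hz, hr]
  have hzi : z.im = w.im := by simp [hz]
  have hlow : w.re ^ 2 ≤ K2 * Real.exp (4 * ‖w‖) * ‖chi z‖ := by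
    have hr1 : 1 < r := by rw [hr]; linarith
    have hk := hK2 r ⟨hr1.le, by rw [hr]; linarith⟩
    rw [Real.norm_of_nonneg (by positivity)] at hk
    have hGp : 0 < ‖Gammaℝ r‖ := norm_pos_iff.mpr
      (Gammaℝ_ne_zero_of_re_pos (by simp; linarith))
    rw [div_le_iff₀ (by positivity)] at hk
    rw [chi_eq (s := (r : ℂ)) (by simp; linarith) (by exact_mod_cast hr1.ne')] at hk
    rw [chi_eq (s := z) (by linarith) (by intro h; rw [h] at hzr; simp at hzr; linarith)]
    have hGz : ‖Gammaℝ r‖ ≤ Real.exp (4 * ‖w‖) * ‖Gammaℝ z‖ := by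
      rw [norm_Gammaℝ, norm_Gammaℝ, hzr, ofReal_re]
      have h1 := norm_Gamma_lower (z := z / 2) (by simp [hzr]; linarith)
      have e1 : (z / 2).re = r / 2 := by simp [hzr]
      have e2 : (z / 2).im = w.im / 2 := by simp [hzi]
      rw [e1, e2] at h1
      have e3 : ‖Gamma ((r : ℂ) / 2)‖ = Real.Gamma (r / 2) := by
        rw [show (r : ℂ) / 2 = ((r / 2 : ℝ) : ℂ) by push_cast; rfl, Gamma_ofReal, norm_real,
          Real.norm_of_nonneg (Real.Gamma_pos_of_pos (by linarith)).le]
      rw [e3]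
      have h2 : 1 ≤ Real.exp (4 * ‖w‖) * Real.exp (-(Real.pi * |w.im / 2|)) := by
        rw [← Real.exp_add]
        apply Real.one_le_exp
        have h3 := abs_im_le_norm w
        have h4 := Real.pi_lt_four
        have h5 := Real.pi_pos
        rw [abs_div, abs_two]
        have h6 := abs_nonneg w.im
        nlinarith
      have h4 : 0 < Real.pi ^ (-r / 2) := Real.rpow_pos_of_pos Real.pi_pos _
      have h5 : 0 < Real.Gamma (r / 2) := Real.Gamma_pos_of_pos (by linarith)
      calc _ = Real.pi ^ (-r / 2) * (Real.Gamma (r / 2) * 1) := by ring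
        _ ≤ Real.pi ^ (-r / 2) * (Real.Gamma (r / 2) *
            (Real.exp (4 * ‖w‖) * Real.exp (-(Real.pi * |w.im / 2|)))) := by gcongr
        _ = Real.pi ^ (-r / 2) * (Real.exp (4 * ‖w‖) * (Real.Gamma (r / 2) *
            Real.exp (-(Real.pi * |w.im / 2|)))) := by ring
        _ ≤ Real.pi ^ (-r / 2) * (Real.exp (4 * ‖w‖) * ‖Gamma (z / 2)‖) := by gcongr
        _ = _ := by ring
    have hzeta := zeta_lower (s := z) (x := r) hr1 hzr.ge
    simp only [norm_mul] at hk ⊢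
    have a1 : ‖(r : ℂ)‖ = r := by rw [norm_real, Real.norm_of_nonneg (by linarith)]
    have a2 : ‖(r : ℂ) - 1‖ = r - 1 := by
      rw [show (r : ℂ) - 1 = ((r - 1 : ℝ) : ℂ) by push_cast; rfl, norm_real,
        Real.norm_of_nonneg (by linarith)]
    have a3 : 1 ≤ ‖z‖ := by
      have := abs_re_le_norm z; rw [hzr, abs_of_pos (by linarith)] at this; linarith
    have a4 : w.re ≤ ‖z - 1‖ := by
      have := abs_re_le_norm (z - 1)
      simp only [sub_re, hzr, one_re] at this
      rw [abs_of_pos (by linarith)] at this; linarith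
    rw [a1, a2] at hk
    have a5 : w.re ≤ r - 1 := by rw [hr]; linarith
    -- divide hk by Gamma
    have hk2 : r * (r - 1) * ‖riemannZeta r‖ ≤ K2 * ‖Gammaℝ r‖ := by
      have : ‖Gammaℝ r‖ * (r * (r - 1) * ‖riemannZeta r‖) ≤ ‖Gammaℝ r‖ * (K2 * ‖Gammaℝ r‖) := by
        nlinarith
      exact le_of_mul_le_mul_left this hGp
    calc w.re ^ 2 = 1 * w.re * w.re * 1 := by ring
      _ ≤ r * (r - 1) * ‖z - 1‖ * (‖riemannZeta z‖ * ‖riemannZeta r‖) := by gcongr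
      _ = (r * (r - 1) * ‖riemannZeta r‖) * (1 * ‖z - 1‖ * ‖riemannZeta z‖) := by ring
      _ ≤ (K2 * ‖Gammaℝ r‖) * (‖z‖ * ‖z - 1‖ * ‖riemannZeta z‖) := by gcongr
      _ ≤ (K2 * (Real.exp (4 * ‖w‖) * ‖Gammaℝ z‖)) * (‖z‖ * ‖z - 1‖ * ‖riemannZeta z‖) := by gcongr
      _ = _ := by ring
  have e6 : Real.exp (6 * ‖w‖) = Real.exp (2 * ‖w‖) * Real.exp (4 * ‖w‖) := by
    rw [← Real.exp_add]; congr 1; ring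
  rw [e6]
  calc _ ≤ (((c + 1) ^ 2 * K1 + 1) * Real.exp (2 * ‖w‖)) *
        (K2 * Real.exp (4 * ‖w‖) * ‖chi z‖) := by gcongr
    _ = _ := by ring

theorem chi_reflect_aux {c : ℝ} (hc : 1 ≤ c) {w : ℂ} (hw : 0 ≤ w.re) :
    ‖chi (c - w) / chi (c + w)‖ ≤ 1 := by
  set g : ℂ → ℂ := fun w => chi (c - w) / chi (c + w) with hg
  have hne : ∀ w : ℂ, 0 ≤ w.re → chi (c + w) ≠ 0 := fun w hw =>
    chi_ne_zero (by simp; linarith)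
  have hgd : ∀ w : ℂ, 0 ≤ w.re → DifferentiableAt ℂ g w := by
    intro w hw
    have := hne w hw
    have := chi_differentiable
    simp only [hg]
    fun_prop (disch := assumption)
  have hg0 : ∀ w : ℂ, w.re = 0 → ‖g w‖ ≤ 1 := by
    intro w hw
    have e : (c : ℂ) - w = (starRingEnd ℂ) (c + w) := by
      apply Complex.ext <;> simp [hw]
    simp only [hg]
    rw [e, chi_conj (by simp; linarith), norm_div, norm_conj]
    exact div_self_le_one _
  obtain ⟨K1, hK1, hK1'⟩ := chi_far hc
  obtain ⟨K2, hK2, hK2'⟩ := chi_near hc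
  have hfar : ∀ w : ℂ, c + 3 ≤ w.re → ‖g w‖ ≤ K1 := by
    intro w hw
    simp only [hg, norm_div]
    exact div_le_of_le_mul₀ (norm_nonneg _) hK1 (hK1' w hw)
  have hgrow : ∀ w : ℂ, 0 < w.re → 1 ≤ ‖w‖ →
      ‖g w‖ ≤ (2 * (1 + 4 * K1 + 4 * K2)) * Real.exp (12 * ‖w‖) := by
    intro w hw hw1
    have hR : 1 ≤ 2 * ‖w‖ := by linarith
    have hexp : 1 ≤ Real.exp (12 * ‖w‖) := Real.one_le_exp (by linarith)
    have := halfdisc (g := g) (R := 2 * ‖w‖)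
      (M := (1 + 4 * K1 + 4 * K2) * Real.exp (12 * ‖w‖)) (by linarith)
      (a := 1) (b := 2) (by nlinarith) (fun v hv _ => hgd v hv) (fun v hv _ => hg0 v hv) (by
        intro v hv hvR
        set R := 2 * ‖w‖ with hRd
        have hvr : v.re ≤ R := by rw [← hvR]; exact re_le_norm v
        have hq0 : 0 ≤ 2 * v.re / R := by positivity
        rw [pow_one]
        rcases le_total (c + 3) v.re with h | h
        · have h1 := hfar v h
          have hq : 2 * v.re / R ≤ 2 := by rw [div_le_iff₀ (by linarith)]; linarith
          have hq2 : (2 * v.re / R) ^ 2 ≤ 4 := by nlinarith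
          have : ‖g v‖ * (2 * v.re / R) ^ 2 ≤ K1 * 4 := by gcongr
          nlinarith
        · have h1 := hK2' v hv h
          have h2 : ‖g v‖ * v.re ^ 2 ≤ K2 * Real.exp (6 * ‖v‖) := by
            simp only [hg, norm_div]
            rw [div_mul_eq_mul_div]
            exact div_le_of_le_mul₀ (norm_nonneg _) (by positivity) h1
          rw [hvR, hRd, show 6 * (2 * ‖w‖) = 12 * ‖w‖ by ring] at h2
          have e : ‖g v‖ * (2 * v.re / R) ^ 2 = 4 * (‖g v‖ * v.re ^ 2) / R ^ 2 := by
            field_simp; ring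
          rw [e, div_le_iff₀ (by positivity)]
          have hR2 : 1 ≤ R ^ 2 := one_le_pow₀ hR
          have h3 : 0 ≤ ‖g v‖ * v.re ^ 2 := by positivity
          calc 4 * (‖g v‖ * v.re ^ 2) ≤ 4 * (K2 * Real.exp (12 * ‖w‖)) := by gcongr
            _ ≤ (1 + 4 * K1 + 4 * K2) * Real.exp (12 * ‖w‖) * 1 := by nlinarith
            _ ≤ _ := by gcongr) w hw.le (by linarith)
    rw [pow_one] at this
    have hlow : 3 / 4 ≤ ‖1 + w ^ 2 / ((2 * ‖w‖ : ℝ) : ℂ) ^ 2‖ := by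
      have h1 : ‖w ^ 2 / ((2 * ‖w‖ : ℝ) : ℂ) ^ 2‖ = 1 / 4 := by
        rw [norm_div, norm_pow, norm_pow, norm_real, Real.norm_of_nonneg (by linarith)]
        have : ‖w‖ ≠ 0 := by linarith
        field_simp; norm_num
      have h2 := norm_sub_norm_le (1 : ℂ) (-(w ^ 2 / ((2 * ‖w‖ : ℝ) : ℂ) ^ 2))
      rw [norm_neg, h1, norm_one, sub_neg_eq_add] at h2
      linarith
    have h9 : (1 : ℝ) / 2 ≤ ‖1 + w ^ 2 / ((2 * ‖w‖ : ℝ) : ℂ) ^ 2‖ ^ 2 := by nlinarith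
    have h10 : ‖g w‖ * (1 / 2) ≤ ‖g w‖ * ‖1 + w ^ 2 / ((2 * ‖w‖ : ℝ) : ℂ) ^ 2‖ ^ 2 := by gcongr
    linarith
  have := PhragmenLindelof.right_half_plane_of_bounded_on_real (f := g) (C := 1) (z := w) ?_ ?_ ?_ ?_ hw
  · exact this
  · apply DifferentiableOn.diffContOnCl
    rw [Complex.closure_setOfPred_lt_re]
    intro v hv
    exact (hgd v hv).differentiableWithinAt
  · refine ⟨1, by norm_num, 12, ?_⟩
    refine Asymptotics.IsBigO.of_bound (2 * (1 + 4 * K1 + 4 * K2)) ?_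
    rw [Filter.eventually_inf_principal]
    filter_upwards [tendsto_norm_cobounded_atTop.eventually_ge_atTop 1] with v hv hv0
    rw [Real.rpow_one, Real.norm_of_nonneg (Real.exp_pos _).le]
    exact hgrow v hv0 hv
  · refine Filter.isBoundedUnder_of_eventually_le (a := K1) ?_
    filter_upwards [Filter.eventually_ge_atTop (c + 3)] with x hx
    exact hfar x (by simpa using hx)
  · intro x
    exact hg0 _ (by simp)

theorem chi_reflect (c : ℝ) (hc : 1 ≤ c) (z z' : ℂ) (hz : c ≤ z.re) (h : z' = 2 * c - z) :
    ‖chi z'‖ ≤ ‖chi z‖ := by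
  have h1 := chi_reflect_aux hc (w := z - c) (by simp; linarith)
  rw [show (c : ℂ) - (z - c) = z' by rw [h]; ring, show (c : ℂ) + (z - c) = z by ring, norm_div] at h1
  have : 0 < ‖chi z‖ := norm_pos_iff.mpr (chi_ne_zero (by linarith))
  rwa [div_le_one this] at h1

theorem gam_poly {a B : ℝ} (ha : 3 / 4 ≤ a) (hB : 248 ≤ B) :
    ((a + 1 / 2) ^ 2 + B) ^ 2 * ((a - 1 / 4) ^ 2 + 0.999 * B) ≤
      (a ^ 2 + B) ^ 2 * ((a + 1 - 1 / 4) ^ 2 + 0.999 * B) := by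
  obtain ⟨x, rfl⟩ : ∃ x, a = 3 / 4 + x := ⟨a - 3 / 4, by ring⟩
  obtain ⟨y, rfl⟩ : ∃ y, B = 248 + y := ⟨B - 248, by ring⟩
  have hx : 0 ≤ x := by linarith
  have hy : 0 ≤ y := by linarith
  rw [← sub_nonneg]
  ring_nf
  positivity

theorem gam_prod {u : ℂ} (ha : 3 / 4 ≤ u.re) (hB : 248 ≤ u.im ^ 2) (m : ℕ) :
    (∏ j ∈ Finset.range m, ‖u + 1 / 2 + j‖) ^ 4 * ((u.re - 1 / 4) ^ 2 + 0.999 * u.im ^ 2) ≤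
    (∏ j ∈ Finset.range m, ‖u + j‖) ^ 4 * ((u.re + m - 1 / 4) ^ 2 + 0.999 * u.im ^ 2) := by
  induction m with
  | zero => simp
  | succ m ih =>
    rw [Finset.prod_range_succ, Finset.prod_range_succ, mul_pow, mul_pow]
    have hm : (0 : ℝ) ≤ m := Nat.cast_nonneg m
    have h := gam_poly (a := u.re + m) (B := u.im ^ 2) (by linarith) hB
    have e1 : ‖u + 1 / 2 + m‖ ^ 4 = ((u.re + m + 1 / 2) ^ 2 + u.im ^ 2) ^ 2 := by
      rw [show ‖u + 1 / 2 + m‖ ^ 4 = (‖u + 1 / 2 + m‖ ^ 2) ^ 2 by ring, Complex.sq_norm, normSq_apply]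
      simp; ring
    have e2 : ‖u + m‖ ^ 4 = ((u.re + m) ^ 2 + u.im ^ 2) ^ 2 := by
      rw [show ‖u + m‖ ^ 4 = (‖u + m‖ ^ 2) ^ 2 by ring, Complex.sq_norm, normSq_apply]
      simp; ring
    rw [e1, e2]
    push_cast
    set P := (∏ j ∈ Finset.range m, ‖u + 1 / 2 + j‖) ^ 4
    set P' := (∏ j ∈ Finset.range m, ‖u + j‖) ^ 4 with hP'
    have hP0 : 0 ≤ P' := by positivity
    calc _ = ((u.re + m + 1 / 2) ^ 2 + u.im ^ 2) ^ 2 *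
          (P * ((u.re - 1 / 4) ^ 2 + 0.999 * u.im ^ 2)) := by ring
      _ ≤ ((u.re + m + 1 / 2) ^ 2 + u.im ^ 2) ^ 2 *
          (P' * ((u.re + m - 1 / 4) ^ 2 + 0.999 * u.im ^ 2)) := by gcongr
      _ = P' * (((u.re + m + 1 / 2) ^ 2 + u.im ^ 2) ^ 2 *
          ((u.re + m - 1 / 4) ^ 2 + 0.999 * u.im ^ 2)) := by ring
      _ ≤ P' * (((u.re + m) ^ 2 + u.im ^ 2) ^ 2 *
          ((u.re + m + 1 - 1 / 4) ^ 2 + 0.999 * u.im ^ 2)) := by gcongr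
      _ = _ := by ring

theorem gam_seq {u : ℂ} (ha : 3 / 4 ≤ u.re) (hB : 248 ≤ u.im ^ 2) {n : ℕ} (hn : 0 < n) :
    ‖GammaSeq u n‖ ^ 4 * ((u.re - 1 / 4) ^ 2 + 0.999 * u.im ^ 2) ≤
    ‖GammaSeq (u + 1 / 2) n‖ ^ 4 *
      ((u.re * (n : ℝ)⁻¹ + 1 + 3 / 4 * (n : ℝ)⁻¹) ^ 2 + 0.999 * u.im ^ 2 * ((n : ℝ)⁻¹) ^ 2) := by
  have h := gam_prod ha hB (n + 1)
  have hn' : (0 : ℝ) < n := by exact_mod_cast hn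
  have p1 : 0 < ∏ j ∈ Finset.range (n + 1), ‖u + 1 / 2 + j‖ := by
    apply Finset.prod_pos
    intro j _
    rw [norm_pos_iff]
    intro h0
    have := congrArg re h0
    simp at this
    have hj : (0 : ℝ) ≤ j := Nat.cast_nonneg j
    linarith
  have p2 : 0 < ∏ j ∈ Finset.range (n + 1), ‖u + j‖ := by
    apply Finset.prod_pos
    intro j _
    rw [norm_pos_iff]
    intro h0
    have := congrArg re h0
    simp at this
    have hj : (0 : ℝ) ≤ j := Nat.cast_nonneg j
    linarith
  have nc : ∀ z : ℂ, ‖(n : ℂ) ^ z‖ = (n : ℝ) ^ z.re := fun z => norm_natCast_cpow_of_pos hn z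
  have e3 : ((n : ℝ) ^ (u + 1 / 2).re) ^ 4 = ((n : ℝ) ^ u.re) ^ 4 * (n : ℝ) ^ 2 := by
    have : (u + 1 / 2).re = u.re + 1 / 2 := by simp
    rw [this, Real.rpow_add hn', mul_pow]
    congr 1
    rw [← Real.rpow_natCast, ← Real.rpow_mul hn'.le]
    norm_num
  simp only [GammaSeq, norm_div, norm_mul, norm_prod, div_pow, mul_pow, nc, e3]
  set P := ∏ j ∈ Finset.range (n + 1), ‖u + 1 / 2 + j‖
  set P' := ∏ j ∈ Finset.range (n + 1), ‖u + j‖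
  set c := ((n : ℝ) ^ u.re) ^ 4 * ‖((Nat.factorial n : ℕ) : ℂ)‖ ^ 4 with hc
  have hc0 : 0 ≤ c := by positivity
  have : (u.re * (n : ℝ)⁻¹ + 1 + 3 / 4 * (n : ℝ)⁻¹) ^ 2 + 0.999 * u.im ^ 2 * ((n : ℝ)⁻¹) ^ 2 =
    ((u.re + (n + 1 : ℕ) - 1 / 4) ^ 2 + 0.999 * u.im ^ 2) / (n : ℝ) ^ 2 := by
    push_cast
    field_simp
    ring
  rw [this]
  set Q := (u.re - 1 / 4) ^ 2 + 0.999 * u.im ^ 2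
  set Q' := (u.re + (n + 1 : ℕ) - 1 / 4) ^ 2 + 0.999 * u.im ^ 2
  have l : c / P' ^ 4 * Q ≤ c / P ^ 4 * Q' := by
    rw [div_mul_eq_mul_div, div_mul_eq_mul_div, div_le_div_iff₀ (by positivity) (by positivity)]
    calc _ = c * (P ^ 4 * Q) := by ring
      _ ≤ c * (P' ^ 4 * Q') := by gcongr
      _ = _ := by ring
  refine l.trans (le_of_eq ?_)
  rw [hc]
  field_simp

theorem gam_half {u : ℂ} (ha : 3 / 4 ≤ u.re) (hB : 248 ≤ u.im ^ 2) :
    ‖Gamma u‖ ^ 4 * ((u.re - 1 / 4) ^ 2 + 0.999 * u.im ^ 2) ≤ ‖Gamma (u + 1 / 2)‖ ^ 4 := by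
  have l1 := ((GammaSeq_tendsto_Gamma u).norm.pow 4).mul_const
    ((u.re - 1 / 4) ^ 2 + 0.999 * u.im ^ 2)
  have i := tendsto_inv_atTop_nhds_zero_nat (𝕜 := ℝ)
  have l2 := ((GammaSeq_tendsto_Gamma (u + 1 / 2)).norm.pow 4).mul
    (((((i.const_mul u.re).add_const 1).add (i.const_mul (3 / 4))).pow 2).add
      ((i.pow 2).const_mul (0.999 * u.im ^ 2)))
  norm_num at l2
  refine le_of_tendsto_of_tendsto l1 l2 ?_
  filter_upwards [Filter.eventually_gt_atTop 0] with n hn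
  have := gam_seq ha hB hn
  norm_num at this ⊢
  exact this

theorem bern_neg {h c : ℝ} (hh : -1 < h) (hc : 0 < c) : 1 - c * h ≤ (1 + h) ^ (-c) := by
  have h1 : 0 < 1 + h := by linarith
  rw [Real.rpow_def_of_pos h1]
  have h2 := Real.add_one_le_exp (Real.log (1 + h) * -c)
  have h3 := Real.log_le_sub_one_of_pos h1
  nlinarith

theorem tele_up {x c : ℝ} (hx : 1 < x) (hc : 0 < c) :
    x ^ (-(c + 1)) ≤ ((x - 1) ^ (-c) - x ^ (-c)) / c := by
  have hx0 : 0 < x := by linarith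
  have h := bern_neg (h := -1 / x) (c := c) (by rw [lt_div_iff₀ hx0]; linarith) hc
  have e : x - 1 = x * (1 + -1 / x) := by field_simp; ring
  rw [e, Real.mul_rpow hx0.le (by rw [show 1 + -1 / x = (x - 1) / x by field_simp; ring]; apply div_nonneg <;> linarith), le_div_iff₀ hc]
  have e2 : x ^ (-(c + 1)) = x ^ (-c) / x := by
    rw [neg_add, Real.rpow_add hx0, Real.rpow_neg_one]; rfl
  rw [e2]
  have := Real.rpow_pos_of_pos hx0 (-c)
  calc x ^ (-c) / x * c = x ^ (-c) * (1 - c * (-1 / x)) - x ^ (-c) := by field_simp; ring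
    _ ≤ _ := by gcongr

theorem tele_lo {x c : ℝ} (hx : 0 < x) (hc : 0 < c) :
    (x ^ (-c) - (x + 1) ^ (-c)) / c ≤ x ^ (-(c + 1)) := by
  have h := bern_neg (h := 1 / x) (c := c) (by have : 0 < 1 / x := by positivity
                                               linarith) hc
  have e : x + 1 = x * (1 + 1 / x) := by field_simp
  rw [e, Real.mul_rpow hx.le (by positivity), div_le_iff₀ hc]
  have e2 : x ^ (-(c + 1)) = x ^ (-c) / x := by
    rw [neg_add, Real.rpow_add hx, Real.rpow_neg_one]; rfl
  rw [e2]
  have := Real.rpow_pos_of_pos hx (-c)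
  calc _ ≤ x ^ (-c) - x ^ (-c) * (1 - c * (1 / x)) := by gcongr
    _ = _ := by field_simp; ring

theorem zeta_real {c : ℝ} (hc : 0 < c) :
    HasSum (fun n : ℕ => ((n + 1 : ℝ)) ^ (-(c + 1))) ‖riemannZeta ((c + 1 : ℝ))‖ := by
  have hs : Summable (fun n : ℕ => ((n + 1 : ℝ)) ^ (-(c + 1))) := by
    have := (summable_nat_add_iff 1).mpr (Real.summable_nat_rpow (p := -(c + 1)) |>.mpr (by linarith))
    simpa using this
  have e : riemannZeta ((c + 1 : ℝ)) = ((∑' n : ℕ, ((n + 1 : ℝ)) ^ (-(c + 1)) : ℝ) : ℂ) := by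
    rw [zeta_eq_tsum_one_div_nat_add_one_cpow (by simp; exact hc), ofReal_tsum]
    congr 1; ext n
    rw [ofReal_cpow (by positivity)]
    push_cast
    rw [cpow_neg, one_div]
  rw [e, norm_real, Real.norm_of_nonneg (tsum_nonneg fun n => by positivity)]
  exact hs.hasSum

theorem zeta_U {c : ℝ} (hc : 0 < c) (N : ℕ) :
    ‖riemannZeta ((c + 1 : ℝ))‖ ≤
      ∑ n ∈ Finset.range (N + 1), ((n + 1 : ℝ)) ^ (-(c + 1)) + (N + 1 : ℝ) ^ (-c) / c := by
  set F : ℕ → ℝ := fun M => ∑ n ∈ Finset.range (M + 1), ((n + 1 : ℝ)) ^ (-(c + 1)) + (M + 1 : ℝ) ^ (-c) / c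
  have hF : Antitone F := by
    apply antitone_nat_of_succ_le
    intro n
    simp only [F]
    rw [Finset.sum_range_succ _ (n + 1)]
    have hn : (0 : ℝ) ≤ n := Nat.cast_nonneg n
    have := tele_up (x := (n + 1 : ℕ) + 1) (c := c) (by push_cast; linarith) hc
    rw [sub_div] at this
    push_cast at this ⊢
    rw [add_sub_cancel_right] at this
    linarith
  have t1 := (Filter.tendsto_add_atTop_iff_nat 1).mpr (zeta_real hc).tendsto_sum_nat
  have t2 : Filter.Tendsto (fun M : ℕ => (M + 1 : ℝ) ^ (-c) / c) Filter.atTop (nhds 0) := by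
    have := ((tendsto_rpow_neg_atTop hc).comp (Filter.tendsto_atTop_add_const_right _ (1 : ℝ) tendsto_natCast_atTop_atTop)).div_const c
    simpa using this
  have t3 := t1.add t2
  rw [add_zero] at t3
  exact hF.le_of_tendsto t3 N

theorem zeta_L {c : ℝ} (hc : 0 < c) (N : ℕ) :
      ∑ n ∈ Finset.range N, ((n + 1 : ℝ)) ^ (-(c + 1)) + (N + 1 : ℝ) ^ (-c) / c ≤
    ‖riemannZeta ((c + 1 : ℝ))‖ := by
  set F : ℕ → ℝ := fun M => ∑ n ∈ Finset.range M, ((n + 1 : ℝ)) ^ (-(c + 1)) + (M + 1 : ℝ) ^ (-c) / c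
  have hF : Monotone F := by
    apply monotone_nat_of_le_succ
    intro n
    simp only [F]
    rw [Finset.sum_range_succ]
    have hn : (0 : ℝ) ≤ n := Nat.cast_nonneg n
    have := tele_lo (x := n + 1) (c := c) (by linarith) hc
    rw [sub_div] at this
    push_cast at this ⊢
    linarith
  have t1 := (zeta_real hc).tendsto_sum_nat
  have t2 : Filter.Tendsto (fun M : ℕ => (M + 1 : ℝ) ^ (-c) / c) Filter.atTop (nhds 0) := by
    have := ((tendsto_rpow_neg_atTop hc).comp (Filter.tendsto_atTop_add_const_right _ (1 : ℝ) tendsto_natCast_atTop_atTop)).div_const c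
    simpa using this
  have t3 := t1.add t2
  rw [add_zero] at t3
  exact hF.ge_of_tendsto t3 N

theorem rpow_v {x : ℝ} (hx : 0 < x) {y : ℝ} (k : ℕ) (h : y = -(k / 2)) : x ^ y = ((√x)⁻¹) ^ k := by
  rw [h, Real.rpow_neg hx.le, inv_pow, Real.sqrt_eq_rpow, ← Real.rpow_natCast (x ^ (1 / 2 : ℝ)), ← Real.rpow_mul hx.le]
  congr 2; ring

theorem v_bd {x l u : ℝ} (hl : 0 < l) (hu : 0 < u) (h1 : l ^ 2 * x ≤ 1) (h2 : 1 ≤ u ^ 2 * x) :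
    l ≤ (√x)⁻¹ ∧ (√x)⁻¹ ≤ u := by
  have hx : 0 < x := by
    by_contra h
    nlinarith [sq_nonneg u]
  have hs : 0 < √x := Real.sqrt_pos.mpr hx
  have hq : √x ^ 2 = x := Real.sq_sqrt hx.le
  constructor
  · rw [le_inv_comm₀ hl hs, Real.sqrt_le_left (by positivity), inv_pow, le_inv_comm₀ hx (by positivity)]
    rw [← one_div, le_div_iff₀ hx]; exact h1
  · rw [inv_le_comm₀ hs hu]
    apply Real.le_sqrt_of_sq_le
    rw [inv_pow, inv_le_comm₀ (by positivity) hx, ← one_div, div_le_iff₀ hx]; exact h2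

theorem v2 : (0.70710 : ℝ) ≤ (√2)⁻¹ ∧ (√2)⁻¹ ≤ (0.70711 : ℝ) :=
  v_bd (by norm_num) (by norm_num) (by norm_num) (by norm_num)
theorem v3 : (0.57735 : ℝ) ≤ (√3)⁻¹ ∧ (√3)⁻¹ ≤ (0.57736 : ℝ) :=
  v_bd (by norm_num) (by norm_num) (by norm_num) (by norm_num)
theorem v4 : (0.5 : ℝ) ≤ (√4)⁻¹ ∧ (√4)⁻¹ ≤ (0.5 : ℝ) :=
  v_bd (by norm_num) (by norm_num) (by norm_num) (by norm_num)
theorem v5 : (0.44721 : ℝ) ≤ (√5)⁻¹ ∧ (√5)⁻¹ ≤ (0.44722 : ℝ) :=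
  v_bd (by norm_num) (by norm_num) (by norm_num) (by norm_num)
theorem v6 : (0.40824 : ℝ) ≤ (√6)⁻¹ ∧ (√6)⁻¹ ≤ (0.40825 : ℝ) :=
  v_bd (by norm_num) (by norm_num) (by norm_num) (by norm_num)
theorem v7 : (0.37796 : ℝ) ≤ (√7)⁻¹ ∧ (√7)⁻¹ ≤ (0.37797 : ℝ) :=
  v_bd (by norm_num) (by norm_num) (by norm_num) (by norm_num)
theorem v8 : (0.35355 : ℝ) ≤ (√8)⁻¹ ∧ (√8)⁻¹ ≤ (0.35356 : ℝ) :=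
  v_bd (by norm_num) (by norm_num) (by norm_num) (by norm_num)
theorem v9 : (1 / 3 : ℝ) ≤ (√9)⁻¹ ∧ (√9)⁻¹ ≤ (1 / 3 : ℝ) :=
  v_bd (by norm_num) (by norm_num) (by norm_num) (by norm_num)

theorem U4 (k : ℕ) {c : ℝ} (hc : 0 < c) (h : c = k / 2) :
    ‖riemannZeta ((c + 1 : ℝ))‖ ≤ 1 + 0.70711 ^ (k + 2) + 0.57736 ^ (k + 2) + 0.5 ^ (k + 2) + 0.5 ^ k / c := by
  have := zeta_U hc 3
  simp only [Finset.sum_range_succ, Finset.sum_range_zero] at this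
  norm_num at this
  rw [rpow_v (by norm_num : (0 : ℝ) < 2) (k + 2) (by push_cast; linarith),
    rpow_v (by norm_num : (0 : ℝ) < 3) (k + 2) (by push_cast; linarith),
    rpow_v (by norm_num : (0 : ℝ) < 4) (k + 2) (by push_cast; linarith),
    rpow_v (by norm_num : (0 : ℝ) < 4) k (by linarith)] at this
  push_cast
  refine this.trans ?_
  gcongr
  · exact v2.2
  · exact v3.2
  · exact v4.2
  · exact v4.2

theorem L3 (k : ℕ) {c : ℝ} (hc : 0 < c) (h : c = k / 2) :
    1 + 0.70710 ^ (k + 2) + 0.57735 ^ (k + 2) + 0.5 ^ k / c ≤ ‖riemannZeta ((c + 1 : ℝ))‖ := by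
  have := zeta_L hc 3
  simp only [Finset.sum_range_succ, Finset.sum_range_zero] at this
  norm_num at this
  rw [rpow_v (by norm_num : (0 : ℝ) < 2) (k + 2) (by push_cast; linarith),
    rpow_v (by norm_num : (0 : ℝ) < 3) (k + 2) (by push_cast; linarith),
    rpow_v (by norm_num : (0 : ℝ) < 4) k (by linarith)] at this
  push_cast
  refine le_trans ?_ this
  gcongr
  · exact v2.1
  · exact v3.1
  · exact v4.1

theorem U9 (k : ℕ) {c : ℝ} (hc : 0 < c) (h : c = k / 2) :
    ‖riemannZeta ((c + 1 : ℝ))‖ ≤ 1 + 0.70711 ^ (k + 2) + 0.57736 ^ (k + 2) + 0.5 ^ (k + 2)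
     + 0.44722 ^ (k + 2) + 0.40825 ^ (k + 2) + 0.37797 ^ (k + 2) + 0.35356 ^ (k + 2)
     + (1 / 3) ^ (k + 2) + (1 / 3) ^ k / c := by
  have := zeta_U hc 8
  simp only [Finset.sum_range_succ, Finset.sum_range_zero] at this
  norm_num at this
  rw [rpow_v (by norm_num : (0 : ℝ) < 2) (k + 2) (by push_cast; linarith),
    rpow_v (by norm_num : (0 : ℝ) < 3) (k + 2) (by push_cast; linarith),
    rpow_v (by norm_num : (0 : ℝ) < 4) (k + 2) (by push_cast; linarith),
    rpow_v (by norm_num : (0 : ℝ) < 5) (k + 2) (by push_cast; linarith),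
    rpow_v (by norm_num : (0 : ℝ) < 6) (k + 2) (by push_cast; linarith),
    rpow_v (by norm_num : (0 : ℝ) < 7) (k + 2) (by push_cast; linarith),
    rpow_v (by norm_num : (0 : ℝ) < 8) (k + 2) (by push_cast; linarith),
    rpow_v (by norm_num : (0 : ℝ) < 9) (k + 2) (by push_cast; linarith),
    rpow_v (by norm_num : (0 : ℝ) < 9) k (by linarith)] at this
  push_cast
  refine this.trans ?_
  gcongr
  · exact v2.2
  · exact v3.2
  · exact v4.2
  · exact v5.2
  · exact v6.2
  · exact v7.2
  · exact v8.2
  · exact v9.2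
  · exact v9.2

theorem L8 (k : ℕ) {c : ℝ} (hc : 0 < c) (h : c = k / 2) :
    1 + 0.70710 ^ (k + 2) + 0.57735 ^ (k + 2) + 0.5 ^ (k + 2) + 0.44721 ^ (k + 2)
     + 0.40824 ^ (k + 2) + 0.37796 ^ (k + 2) + 0.35355 ^ (k + 2) + (1 / 3) ^ k / c
      ≤ ‖riemannZeta ((c + 1 : ℝ))‖ := by
  have := zeta_L hc 8
  simp only [Finset.sum_range_succ, Finset.sum_range_zero] at this
  norm_num at this
  rw [rpow_v (by norm_num : (0 : ℝ) < 2) (k + 2) (by push_cast; linarith),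
    rpow_v (by norm_num : (0 : ℝ) < 3) (k + 2) (by push_cast; linarith),
    rpow_v (by norm_num : (0 : ℝ) < 4) (k + 2) (by push_cast; linarith),
    rpow_v (by norm_num : (0 : ℝ) < 5) (k + 2) (by push_cast; linarith),
    rpow_v (by norm_num : (0 : ℝ) < 6) (k + 2) (by push_cast; linarith),
    rpow_v (by norm_num : (0 : ℝ) < 7) (k + 2) (by push_cast; linarith),
    rpow_v (by norm_num : (0 : ℝ) < 8) (k + 2) (by push_cast; linarith),
    rpow_v (by norm_num : (0 : ℝ) < 9) k (by linarith)] at this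
  push_cast
  refine le_trans ?_ this
  gcongr
  · exact v2.1
  · exact v3.1
  · exact v4.1
  · exact v5.1
  · exact v6.1
  · exact v7.1
  · exact v8.1
  · exact v9.1

theorem zq_of {x Z u l : ℝ} (hx : 1 < x) (hu : ‖riemannZeta (x : ℝ)‖ ≤ u) (hl0 : 0 < l)
    (hl : l ≤ ‖riemannZeta ((x + 1 : ℝ) : ℂ)‖) (hZ : u ≤ Z * l) (s : ℂ) (hs : x ≤ s.re) :
    ‖riemannZeta s‖ ≤ Z * ‖riemannZeta (s + 1)‖ := by
  have h := zeta_ratio hx hs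
  push_cast at hl
  have h0 : 0 ≤ ‖riemannZeta (s + 1)‖ := norm_nonneg _
  have h2 : ‖riemannZeta s‖ * l ≤ (Z * ‖riemannZeta (s + 1)‖) * l := by
    calc _ ≤ ‖riemannZeta s‖ * ‖riemannZeta ((x : ℂ) + 1)‖ := by gcongr
      _ ≤ _ := h
      _ ≤ u * ‖riemannZeta (s + 1)‖ := by gcongr
      _ ≤ (Z * l) * ‖riemannZeta (s + 1)‖ := by gcongr
      _ = _ := by ring
  exact le_of_mul_le_mul_right h2 hl0

theorem zq15 (s : ℂ) (hs : 3 / 2 ≤ s.re) : ‖riemannZeta s‖ ≤ 1.97 * ‖riemannZeta (s + 1)‖ := by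
  have h1 := U9 1 (c := 1 / 2) (by norm_num) (by norm_num)
  have h2 := L8 3 (c := 3 / 2) (by norm_num) (by norm_num)
  norm_num only at h1 h2
  refine zq_of (x := 3 / 2) (by norm_num) h1 ?_ (by norm_num only at h2 ⊢; exact h2) ?_ s hs <;> norm_num only

theorem zq20 (s : ℂ) (hs : 2 ≤ s.re) : ‖riemannZeta s‖ ≤ 1.404 * ‖riemannZeta (s + 1)‖ := by
  have h1 := U4 2 (c := 1) (by norm_num) (by norm_num)
  have h2 := L3 4 (c := 2) (by norm_num) (by norm_num)
  norm_num only at h1 h2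
  refine zq_of (x := 2) (by norm_num) h1 ?_ (by norm_num only at h2 ⊢; exact h2) ?_ s hs <;> norm_num only

theorem zq25 (s : ℂ) (hs : 5 / 2 ≤ s.re) : ‖riemannZeta s‖ ≤ 1.208 * ‖riemannZeta (s + 1)‖ := by
  have h1 := U4 3 (c := 3 / 2) (by norm_num) (by norm_num)
  have h2 := L3 5 (c := 5 / 2) (by norm_num) (by norm_num)
  norm_num only at h1 h2
  refine zq_of (x := 5 / 2) (by norm_num) h1 ?_ (by norm_num only at h2 ⊢; exact h2) ?_ s hs <;> norm_num only

theorem zq30 (s : ℂ) (hs : 3 ≤ s.re) : ‖riemannZeta s‖ ≤ 1.12 * ‖riemannZeta (s + 1)‖ := by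
  have h1 := U4 4 (c := 2) (by norm_num) (by norm_num)
  have h2 := L3 6 (c := 3) (by norm_num) (by norm_num)
  norm_num only at h1 h2
  refine zq_of (x := 3) (by norm_num) h1 ?_ (by norm_num only at h2 ⊢; exact h2) ?_ s hs <;> norm_num only

theorem zq35 (s : ℂ) (hs : 7 / 2 ≤ s.re) : ‖riemannZeta s‖ ≤ 1.073 * ‖riemannZeta (s + 1)‖ := by
  have h1 := U4 5 (c := 5 / 2) (by norm_num) (by norm_num)
  have h2 := L3 7 (c := 7 / 2) (by norm_num) (by norm_num)
  norm_num only at h1 h2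
  refine zq_of (x := 7 / 2) (by norm_num) h1 ?_ (by norm_num only at h2 ⊢; exact h2) ?_ s hs <;> norm_num only

theorem chi_step (w : ℂ) (hre : 3 / 2 ≤ w.re) (him : 31.6 ≤ |w.im|) (Z k : ℝ) (hk : 0.4463 * Z ≤ k)
    (hz : ‖riemannZeta w‖ ≤ Z * ‖riemannZeta (w + 1)‖) : ‖chi w‖ ≤ k * ‖chi (w + 1)‖ := by
  have hne : ∀ z : ℂ, 31.6 ≤ |z.im| → z ≠ 1 := by
    rintro z h rfl; norm_num at h
  rw [chi_eq (by linarith) (hne _ him), chi_eq (s := w + 1) (by simp; linarith) (hne _ (by simpa using him))]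
  simp only [norm_mul, norm_Gammaℝ]
  have n1 : ‖w - 1‖ ≤ ‖w + 1‖ := by
    apply norm_mono
    · simp
    · simp only [sub_re, add_re, one_re]
      rw [abs_of_nonneg (by linarith), abs_of_nonneg (by linarith)]; linarith
  have h2 : ((w + 1) / 2) = w / 2 + 1 / 2 := by ring
  have h3 : w + 1 - 1 = w := by ring
  have hi : 31.6 ^ 2 ≤ w.im ^ 2 := by rw [← sq_abs w.im]; gcongr
  have e1 : (w / 2).re = w.re / 2 := by simp
  have e2 : (w / 2).im = w.im / 2 := by simp
  have g := gam_half (u := w / 2) (by rw [e1]; linarith) (by rw [e2]; norm_num at hi ⊢; linarith)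
  rw [e1, e2] at g
  rw [h2, h3]
  have g2 : √Real.pi * ‖Gamma (w / 2)‖ ≤ 0.4463 * ‖Gamma (w / 2 + 1 / 2)‖ := by
    apply le_of_pow_le_pow_left₀ (n := 4) (by norm_num) (by positivity)
    rw [mul_pow, mul_pow, show √Real.pi ^ 4 = (√Real.pi ^ 2) ^ 2 by ring, Real.sq_sqrt Real.pi_pos.le]
    have hp := Real.pi_lt_d4
    have hp0 := Real.pi_pos
    have hp2 : Real.pi ^ 2 ≤ 3.1416 ^ 2 := by gcongr
    have hq : 249.6 ≤ (w.re / 2 - 1 / 4) ^ 2 + 0.999 * (w.im / 2) ^ 2 := by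
      norm_num at hi ⊢; nlinarith
    have g0 : 0 ≤ ‖Gamma (w / 2)‖ ^ 4 := by positivity
    have g3 : ‖Gamma (w / 2)‖ ^ 4 * 249.6 ≤ ‖Gamma (w / 2 + 1 / 2)‖ ^ 4 :=
      le_trans (by gcongr) g
    calc Real.pi ^ 2 * ‖Gamma (w / 2)‖ ^ 4 ≤ 3.1416 ^ 2 * ‖Gamma (w / 2)‖ ^ 4 := by gcongr
      _ ≤ 0.4463 ^ 4 * (‖Gamma (w / 2)‖ ^ 4 * 249.6) := by
          norm_num; linarith
      _ ≤ _ := by gcongr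
  have e3 : Real.pi ^ (-w.re / 2) = √Real.pi * Real.pi ^ (-(w + 1).re / 2) := by
    rw [Real.sqrt_eq_rpow, ← Real.rpow_add Real.pi_pos]; congr 1; simp; ring
  rw [e3]
  set P := Real.pi ^ (-(w + 1).re / 2)
  have hP : 0 ≤ P := Real.rpow_nonneg Real.pi_pos.le _
  calc _ = ‖w‖ * ‖w - 1‖ * P * (√Real.pi * ‖Gamma (w / 2)‖) * ‖riemannZeta w‖ := by ring
    _ ≤ ‖w‖ * ‖w + 1‖ * P * (0.4463 * ‖Gamma (w / 2 + 1 / 2)‖) * (Z * ‖riemannZeta (w + 1)‖) := by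
        gcongr
    _ = (0.4463 * Z) * (‖w‖ * ‖w + 1‖ * P * (‖Gamma (w / 2 + 1 / 2)‖) * (‖riemannZeta (w + 1)‖)) := by ring
    _ ≤ k * (‖w‖ * ‖w + 1‖ * P * (‖Gamma (w / 2 + 1 / 2)‖) * (‖riemannZeta (w + 1)‖)) := by gcongr
    _ = _ := by ring

theorem cq1 (w : ℂ) (hre : 3 / 2 ≤ w.re) (him : 31.6 ≤ |w.im|) : ‖chi w‖ ≤ 0.8793 * ‖chi (w + 1)‖ :=
  chi_step w hre him _ _ (by norm_num) (zq15 w hre)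
theorem cq2 (w : ℂ) (hre : 2 ≤ w.re) (him : 31.6 ≤ |w.im|) : ‖chi w‖ ≤ 0.6267 * ‖chi (w + 1)‖ :=
  chi_step w (by linarith) him _ _ (by norm_num) (zq20 w hre)
theorem cq3 (w : ℂ) (hre : 5 / 2 ≤ w.re) (him : 31.6 ≤ |w.im|) : ‖chi w‖ ≤ 0.5392 * ‖chi (w + 1)‖ :=
  chi_step w (by linarith) him _ _ (by norm_num) (zq25 w hre)
theorem cq4 (w : ℂ) (hre : 3 ≤ w.re) (him : 31.6 ≤ |w.im|) : ‖chi w‖ ≤ 0.4999 * ‖chi (w + 1)‖ :=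
  chi_step w (by linarith) him _ _ (by norm_num) (zq30 w hre)
theorem cq5 (w : ℂ) (hre : 7 / 2 ≤ w.re) (him : 31.6 ≤ |w.im|) : ‖chi w‖ ≤ 0.4789 * ‖chi (w + 1)‖ :=
  chi_step w (by linarith) him _ _ (by norm_num) (zq35 w hre)

theorem A_bd : ∃ α : ℝ, A = (α : ℂ) ∧ 0.04716 ≤ α ∧ α ≤ 0.05 := by
  refine ⟨Real.pi / 3 - 1, by simp [A], ?_, ?_⟩
  · have := Real.pi_gt_d4; norm_num at this ⊢; linarith
  · have := Real.pi_lt_d4; norm_num at this ⊢; linarith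

theorem nsq (z : ℂ) : ‖z‖ ^ 2 = z.re ^ 2 + z.im ^ 2 := by
  rw [Complex.sq_norm, normSq_apply]; ring

theorem im_sq {s : ℂ} {T : ℝ} (hT : 0 ≤ T) (h : T ≤ |s.im|) : T ^ 2 ≤ s.im ^ 2 := by
  rw [← sq_abs s.im]; gcongr

theorem As_lower (s : ℂ) (hσ : 1 / 2 ≤ s.re) (ht : 31.6 ≤ |s.im|) : 3.37 ≤ ‖A * s + 3‖ := by
  obtain ⟨α, hA, h1, h2⟩ := A_bd
  apply le_of_sq_le_sq _ (norm_nonneg _)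
  rw [nsq, hA]
  have := im_sq (by norm_num) ht
  simp
  have e1 : 3.02358 ≤ α * s.re + 3 := by nlinarith
  have e2 : 0.04716 ^ 2 ≤ α ^ 2 := by gcongr
  have e3 : 3.02358 ^ 2 ≤ (α * s.re + 3) ^ 2 := by gcongr
  have e4 : 0.04716 ^ 2 * 31.6 ^ 2 ≤ α ^ 2 * s.im ^ 2 := by gcongr
  rw [mul_pow]
  norm_num at e3 e4 ⊢
  linarith

theorem As_refl (s : ℂ) (hσ : 1 / 2 ≤ s.re) : ‖A * (1 - s) + 3‖ ≤ ‖A * s + 3‖ := by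
  obtain ⟨α, hA, h1, h2⟩ := A_bd
  apply le_of_sq_le_sq _ (norm_nonneg _)
  rw [nsq, nsq, hA]
  simp
  rw [sq_le_sq, abs_of_nonneg (by nlinarith : 0 ≤ α * s.re + 3), abs_le]
  constructor <;> nlinarith

theorem core (s : ℂ) (hσ : 1 / 2 ≤ s.re) (ht : 31.6 ≤ |s.im|) {q m r3 r2 B c23 css cs2 c12 : ℝ}
    (hq : ‖chi (s + 1)‖ ≤ q * ‖chi (s + 2)‖) (hm : ‖chi s‖ ≤ m * ‖chi (s + 2)‖)
    (h3 : ‖chi (3 - s)‖ ≤ r3 * ‖chi (s + 2)‖) (h2 : ‖chi (2 - s)‖ ≤ r2 * ‖chi (s + 2)‖)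
    (f3 : ‖s - 3‖ ≤ 1.0031 * ‖s - 1‖) (f23 : ‖s + 2‖ * ‖s - 3‖ ≤ c23 * ‖s - 1‖ ^ 2)
    (fss : ‖s‖ ^ 2 ≤ css * ‖s - 1‖ ^ 2) (fs2 : ‖s‖ * ‖s + 2‖ ≤ cs2 * ‖s - 1‖ ^ 2)
    (f12 : ‖s + 1‖ ≤ c12 * ‖s - 2‖)
    (hD : 0 < 1 - 0.5935 * 1.0031 * q - 0.29675 * c23 * m)
    (hB : c12 * (css * r3 + 0.5935 * cs2 * r2 + 0.29675 * c23 * m) ≤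
      B * (1 - 0.5935 * 1.0031 * q - 0.29675 * c23 * m)) :
    f2 s ≠ 0 ∧ ‖f2 (1 - s)‖ ≤ B * ‖f2 s‖ := by
  have hX : 0 < ‖chi (s + 2)‖ := norm_pos_iff.mpr (chi_ne_zero (by simp; linarith))
  have hL := As_lower s hσ ht
  have hR := As_refl s hσ
  have him : ∀ z : ℂ, z.im = s.im → 0 < ‖z‖ := by
    intro z hz
    rw [norm_pos_iff]
    rintro rfl
    simp at hz
    rw [← hz] at ht
    norm_num at ht
  have p1 : 0 < ‖s - 1‖ := him _ (by simp)
  have p2 : 0 < ‖s - 2‖ := him _ (by simp)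
  set X := ‖chi (s + 2)‖
  set a := ‖A * s + 3‖
  set T := a * ‖s - 1‖ ^ 2 * X with hT
  have ha : 0 < a := by linarith
  have hTpos : 0 < T := by positivity
  -- the three terms
  have t2 : ‖2 * (s - 1) * (s - 3) * chi (s + 1)‖ ≤ 0.5935 * 1.0031 * q * T := by
    simp only [norm_mul, Complex.norm_ofNat]
    have hqX : 0 ≤ q * X := (norm_nonneg _).trans hq
    calc 2 * ‖s - 1‖ * ‖s - 3‖ * ‖chi (s + 1)‖ ≤
        (0.5935 * a) * ‖s - 1‖ * (1.0031 * ‖s - 1‖) * (q * X) := by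
          gcongr; norm_num at hL ⊢; linarith
      _ = _ := by rw [hT]; ring
  have t3 : ‖(s + 2) * (s - 3) * chi s‖ ≤ 0.29675 * c23 * m * T := by
    simp only [norm_mul]
    have hmX : 0 ≤ m * X := (norm_nonneg _).trans hm
    have hc : 0 ≤ c23 * ‖s - 1‖ ^ 2 := le_trans (by positivity) f23
    calc ‖s + 2‖ * ‖s - 3‖ * ‖chi s‖ ≤ (c23 * ‖s - 1‖ ^ 2) * (m * X) := by
          gcongr
      _ = 1 * ((c23 * ‖s - 1‖ ^ 2) * (m * X)) := by ring
      _ ≤ (0.29675 * a) * ((c23 * ‖s - 1‖ ^ 2) * (m * X)) := by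
          gcongr; norm_num at hL ⊢; linarith
      _ = _ := by rw [hT]; ring
  have t1 : ‖(A * s + 3) * (s - 1) ^ 2 * chi (s + 2)‖ = T := by
    simp only [norm_mul, norm_pow]; rfl
  have lower : ‖s - 2‖ * ((1 - 0.5935 * 1.0031 * q - 0.29675 * c23 * m) * T) ≤ ‖f2 s‖ := by
    rw [f2, norm_mul]
    gcongr
    have n1 := norm_sub_norm_le ((A * s + 3) * (s - 1) ^ 2 * chi (s + 2)
      - 2 * (s - 1) * (s - 3) * chi (s + 1)) ((s + 2) * (s - 3) * chi s)
    have n2 := norm_sub_norm_le ((A * s + 3) * (s - 1) ^ 2 * chi (s + 2))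
      (2 * (s - 1) * (s - 3) * chi (s + 1))
    linarith
  have u1 : ‖(A * (1 - s) + 3) * s ^ 2 * chi (3 - s)‖ ≤ css * r3 * T := by
    simp only [norm_mul, norm_pow]
    have hh : 0 ≤ css * ‖s - 1‖ ^ 2 := le_trans (by positivity) fss
    calc _ ≤ a * (css * ‖s - 1‖ ^ 2) * (r3 * X) := by gcongr
      _ = _ := by rw [hT]; ring
  have u2 : ‖2 * s * (s + 2) * chi (2 - s)‖ ≤ 0.5935 * cs2 * r2 * T := by
    simp only [norm_mul, Complex.norm_ofNat]
    have hqX : 0 ≤ r2 * X := (norm_nonneg _).trans h2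
    have hh : 0 ≤ cs2 * ‖s - 1‖ ^ 2 := le_trans (by positivity) fs2
    calc 2 * ‖s‖ * ‖s + 2‖ * ‖chi (2 - s)‖ = 2 * (‖s‖ * ‖s + 2‖) * ‖chi (2 - s)‖ := by ring
      _ ≤ (0.5935 * a) * (cs2 * ‖s - 1‖ ^ 2) * (r2 * X) := by
          gcongr; norm_num at hL ⊢; linarith
      _ = _ := by rw [hT]; ring
  have e : f2 (1 - s) = -((s + 1) * ((A * (1 - s) + 3) * s ^ 2 * chi (3 - s)
      - 2 * s * (s + 2) * chi (2 - s) - (s + 2) * (s - 3) * chi s)) := by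
    rw [f2, chi_one_sub, show 1 - s + 2 = 3 - s by ring, show 1 - s + 1 = 2 - s by ring]
    ring
  have upper : ‖f2 (1 - s)‖ ≤ ‖s + 1‖ *
      ((css * r3 + 0.5935 * cs2 * r2 + 0.29675 * c23 * m) * T) := by
    rw [e, norm_neg, norm_mul]
    gcongr
    have n1 := norm_sub_le ((A * (1 - s) + 3) * s ^ 2 * chi (3 - s)
      - 2 * s * (s + 2) * chi (2 - s)) ((s + 2) * (s - 3) * chi s)
    have n2 := norm_sub_le ((A * (1 - s) + 3) * s ^ 2 * chi (3 - s))
      (2 * s * (s + 2) * chi (2 - s))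
    linarith
  have hN : 0 ≤ (css * r3 + 0.5935 * cs2 * r2 + 0.29675 * c23 * m) * T := by
    have w1 := (norm_nonneg _).trans u1
    have w2 := (norm_nonneg _).trans u2
    have w3 := (norm_nonneg _).trans t3
    rw [add_mul, add_mul]
    exact add_nonneg (add_nonneg w1 w2) w3
  have hBnn : 0 ≤ B := by
    have hc12 : 0 ≤ c12 := nonneg_of_mul_nonneg_left ((norm_nonneg _).trans f12) p2
    have hN' := nonneg_of_mul_nonneg_left hN hTpos
    exact nonneg_of_mul_nonneg_left ((mul_nonneg hc12 hN').trans hB) hD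
  constructor
  · rw [← norm_pos_iff]
    exact lt_of_lt_of_le (by positivity) lower
  · calc _ ≤ _ := upper
      _ ≤ (c12 * ‖s - 2‖) * ((css * r3 + 0.5935 * cs2 * r2 + 0.29675 * c23 * m) * T) := by gcongr
      _ = (c12 * (css * r3 + 0.5935 * cs2 * r2 + 0.29675 * c23 * m)) * (‖s - 2‖ * T) := by ring
      _ ≤ (B * (1 - 0.5935 * 1.0031 * q - 0.29675 * c23 * m)) * (‖s - 2‖ * T) := by gcongr
      _ = B * (‖s - 2‖ * ((1 - 0.5935 * 1.0031 * q - 0.29675 * c23 * m) * T)) := by ring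
      _ ≤ _ := by gcongr

theorem fudge (s : ℂ) {T τ : ℝ} (hσ : 1 / 2 ≤ s.re) (hτ : s.re ≤ τ) (hT : T ≤ s.im ^ 2) (hT0 : 998 ≤ T)
    {c23 css cs2 c12 : ℝ}
    (k23 : τ * (2 * c23 - 1) + 6.5 - c23 ≤ (c23 - 1) * T) (hc23 : 1 ≤ c23)
    (kss : 2 * css * τ - css ≤ (css - 1) * T) (hcss : 1 ≤ css)
    (ks2 : τ * (2 + 2 * cs2) + 2 - cs2 ≤ (cs2 - 1) * T) (hcs2 : 1 ≤ cs2)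
    (k12 : τ * (2 + 4 * c12 ^ 2) + 1 - 4 * c12 ^ 2 ≤ (c12 ^ 2 - 1) * T) (hc12 : 1 ≤ c12) :
    ‖s - 3‖ ≤ 1.0031 * ‖s - 1‖ ∧ ‖s + 2‖ * ‖s - 3‖ ≤ c23 * ‖s - 1‖ ^ 2 ∧
    ‖s‖ ^ 2 ≤ css * ‖s - 1‖ ^ 2 ∧ ‖s‖ * ‖s + 2‖ ≤ cs2 * ‖s - 1‖ ^ 2 ∧ ‖s + 1‖ ≤ c12 * ‖s - 2‖ := by
  have n0 := nsq s
  have n1 : ‖s - 1‖ ^ 2 = (s.re - 1) ^ 2 + s.im ^ 2 := by rw [nsq]; simp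
  have n3 : ‖s - 3‖ ^ 2 = (s.re - 3) ^ 2 + s.im ^ 2 := by rw [nsq]; simp
  have n2 : ‖s - 2‖ ^ 2 = (s.re - 2) ^ 2 + s.im ^ 2 := by rw [nsq]; simp
  have m2 : ‖s + 2‖ ^ 2 = (s.re + 2) ^ 2 + s.im ^ 2 := by rw [nsq]; simp
  have m1 : ‖s + 1‖ ^ 2 = (s.re + 1) ^ 2 + s.im ^ 2 := by rw [nsq]; simp
  set σ := s.re
  set y := s.im ^ 2
  have hs2 := sq_nonneg σ
  refine ⟨?_, ?_, ?_, ?_, ?_⟩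
  · apply le_of_sq_le_sq _ (by positivity)
    rw [mul_pow, n3, n1]; norm_num; nlinarith
  · have := two_mul_le_add_sq ‖s + 2‖ ‖s - 3‖
    rw [n1]
    have e1 : (c23 - 1) * T ≤ (c23 - 1) * y := mul_le_mul_of_nonneg_left hT (by linarith)
    have e2 : σ * (2 * c23 - 1) ≤ τ * (2 * c23 - 1) := by gcongr; linarith
    have e3 : 0 ≤ (c23 - 1) * σ ^ 2 := mul_nonneg (by linarith) hs2
    linarith
  · rw [n0, n1]
    have e1 : (css - 1) * T ≤ (css - 1) * y := mul_le_mul_of_nonneg_left hT (by linarith)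
    have e2 : 2 * css * σ ≤ 2 * css * τ := by gcongr
    have e3 : 0 ≤ (css - 1) * σ ^ 2 := mul_nonneg (by linarith) hs2
    linarith
  · have := two_mul_le_add_sq ‖s‖ ‖s + 2‖
    rw [n1]
    have e1 : (cs2 - 1) * T ≤ (cs2 - 1) * y := mul_le_mul_of_nonneg_left hT (by linarith)
    have e2 : σ * (2 + 2 * cs2) ≤ τ * (2 + 2 * cs2) := by gcongr
    have e3 : 0 ≤ (cs2 - 1) * σ ^ 2 := mul_nonneg (by linarith) hs2
    linarith
  · apply le_of_sq_le_sq _ (by positivity)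
    rw [mul_pow, m1, n2]
    have hc : 1 ≤ c12 ^ 2 := one_le_pow₀ hc12
    have e1 : (c12 ^ 2 - 1) * T ≤ (c12 ^ 2 - 1) * y := mul_le_mul_of_nonneg_left hT (by linarith)
    have e2 : σ * (2 + 4 * c12 ^ 2) ≤ τ * (2 + 4 * c12 ^ 2) := by gcongr
    have e3 : 0 ≤ (c12 ^ 2 - 1) * σ ^ 2 := mul_nonneg (by linarith) hs2
    linarith

theorem fudgeI (s : ℂ) (hσ : 1 / 2 ≤ s.re) (hτ : s.re ≤ 4.9) (ht : 31.6 ≤ |s.im|) :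
    ‖s - 3‖ ≤ 1.0031 * ‖s - 1‖ ∧ ‖s + 2‖ * ‖s - 3‖ ≤ 1.011 * ‖s - 1‖ ^ 2 ∧
    ‖s‖ ^ 2 ≤ 1.01 * ‖s - 1‖ ^ 2 ∧ ‖s‖ * ‖s + 2‖ ≤ 1.021 * ‖s - 1‖ ^ 2 ∧
    ‖s + 1‖ ≤ 1.014 * ‖s - 2‖ :=
  fudge s hσ hτ (im_sq (by norm_num) ht) (by norm_num) (by norm_num) (by norm_num) (by norm_num)
    (by norm_num) (by norm_num) (by norm_num) (by norm_num) (by norm_num)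

theorem fudgeII (s : ℂ) (hσ : 1 / 2 ≤ s.re) (hτ : s.re ≤ 20) (ht : 36 ≤ |s.im|) :
    ‖s - 3‖ ≤ 1.0031 * ‖s - 1‖ ∧ ‖s + 2‖ * ‖s - 3‖ ≤ 1.03 * ‖s - 1‖ ^ 2 ∧
    ‖s‖ ^ 2 ≤ 1.04 * ‖s - 1‖ ^ 2 ∧ ‖s‖ * ‖s + 2‖ ≤ 1.07 * ‖s - 1‖ ^ 2 ∧
    ‖s + 1‖ ≤ 1.05 * ‖s - 2‖ :=
  fudge s hσ hτ (im_sq (by norm_num) ht) (by norm_num) (by norm_num) (by norm_num) (by norm_num)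
    (by norm_num) (by norm_num) (by norm_num) (by norm_num) (by norm_num)

theorem coreI (s : ℂ) (hσ : 1 / 2 ≤ s.re) (hτ : s.re ≤ 4.9) (ht : 31.6 ≤ |s.im|)
    {q m r3 r2 B : ℝ}
    (hq : ‖chi (s + 1)‖ ≤ q * ‖chi (s + 2)‖) (hm : ‖chi s‖ ≤ m * ‖chi (s + 2)‖)
    (h3 : ‖chi (3 - s)‖ ≤ r3 * ‖chi (s + 2)‖) (h2 : ‖chi (2 - s)‖ ≤ r2 * ‖chi (s + 2)‖)
    (hD : 0 < 1 - 0.5935 * 1.0031 * q - 0.29675 * 1.011 * m)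
    (hB : 1.014 * (1.01 * r3 + 0.5935 * 1.021 * r2 + 0.29675 * 1.011 * m) ≤
      B * (1 - 0.5935 * 1.0031 * q - 0.29675 * 1.011 * m)) :
    f2 s ≠ 0 ∧ ‖f2 (1 - s)‖ ≤ B * ‖f2 s‖ := by
  obtain ⟨a, b, c, d, e⟩ := fudgeI s hσ hτ ht
  exact core s hσ ht hq hm h3 h2 a b c d e hD hB

-- shift and reflection facts
theorem c1 {s : ℂ} (h : 1 / 2 ≤ s.re) : ‖chi s‖ ≤ ‖chi (s + 1)‖ := by
  rw [← chi_one_sub]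
  exact chi_reflect 1 le_rfl (s + 1) (1 - s) (by simp; linarith) (by push_cast; ring)

theorem sh2 (s : ℂ) : s + 1 + 1 = s + 2 := by ring
theorem sh0 (s : ℂ) : s - 1 + 1 = s := by ring
theorem shm (s : ℂ) : s - 2 + 1 = s - 1 := by ring

theorem r3eq (s : ℂ) : chi (3 - s) = chi (s - 2) := by
  rw [← chi_one_sub]; congr 1; ring
theorem r2eq (s : ℂ) : chi (2 - s) = chi (s - 1) := by
  rw [← chi_one_sub]; congr 1; ring

theorem arcB (s : ℂ) (hσ : 1 / 2 ≤ s.re) (hτ : s.re ≤ 4.9) (ht : 31.6 ≤ |s.im|) :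
    ∃ B : ℝ, 0 ≤ B ∧ f2 s ≠ 0 ∧ ‖f2 (1 - s)‖ ≤ B * ‖f2 s‖ ∧ B ^ 2 * ((s.re - 1 / 2) / 2.2) ^ 3 ≤ 1 := by
  have hx0 : 0 ≤ (s.re - 1 / 2) / 2.2 := by apply div_nonneg <;> linarith
  have key : ∀ B u : ℝ, 0 ≤ B → s.re ≤ u → B ^ 2 * ((u - 1 / 2) / 2.2) ^ 3 ≤ 1 →
      B ^ 2 * ((s.re - 1 / 2) / 2.2) ^ 3 ≤ 1 := by
    intro B u hB hu h
    refine le_trans ?_ h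
    gcongr
  have ht1 : 31.6 ≤ |(s + 1).im| := by simpa using ht
  have htm1 : 31.6 ≤ |(s - 1).im| := by simpa using ht
  have htm2 : 31.6 ≤ |(s - 2).im| := by simpa using ht
  have n2 := norm_nonneg (chi (s + 2))
  rcases le_total s.re 1 with h | h
  · have hq := cq1 (s + 1) (by simp; linarith) ht1
    rw [sh2] at hq
    have hm := (c1 hσ).trans hq
    have h3 : ‖chi (3 - s)‖ ≤ 1 * ‖chi (s + 2)‖ := by
      rw [one_mul]
      exact chi_reflect (5 / 2) (by norm_num) (s + 2) (3 - s) (by simp; linarith) (by push_cast; ring)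
    have h2 := (chi_reflect (3 / 2) (by norm_num) (s + 1) (2 - s) (by simp; linarith) (by push_cast; ring)).trans hq
    obtain ⟨a, b⟩ := coreI s hσ hτ ht (B := 9) hq hm h3 h2 (by norm_num) (by norm_num)
    exact ⟨9, by norm_num, a, b, key 9 1 (by norm_num) h (by norm_num)⟩
  rcases le_total s.re 1.5 with h' | h'
  · have hq := cq2 (s + 1) (by simp; linarith) ht1
    rw [sh2] at hq
    have hm := (c1 hσ).trans hq
    have h3 := (chi_reflect 2 (by norm_num) (s + 1) (3 - s) (by simp; linarith) (by push_cast; ring)).trans hq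
    have h2 := (chi_reflect (3 / 2) (by norm_num) (s + 1) (2 - s) (by simp; linarith) (by push_cast; ring)).trans hq
    obtain ⟨a, b⟩ := coreI s hσ hτ ht (B := 2.9) hq hm h3 h2 (by norm_num) (by norm_num)
    exact ⟨2.9, by norm_num, a, b, key 2.9 1.5 (by norm_num) h' (by norm_num)⟩
  norm_num at h'
  rcases le_total s.re 2 with h4 | h4
  · have hq := cq3 (s + 1) (by simp; linarith) ht1
    rw [sh2] at hq
    have hm := cq1 s h' ht
    have hm : ‖chi s‖ ≤ (0.8793 * 0.5392) * ‖chi (s + 2)‖ := by linarith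
    have h3 := (chi_reflect (3 / 2) (by norm_num) s (3 - s) (by linarith) (by push_cast; ring)).trans hm
    have h2 := (chi_reflect 1 (by norm_num) s (2 - s) (by linarith) (by push_cast; ring)).trans hm
    obtain ⟨a, b⟩ := coreI s hσ hτ ht (B := 1.75) hq hm h3 h2 (by norm_num) (by norm_num)
    exact ⟨1.75, by norm_num, a, b, key 1.75 2 (by norm_num) h4 (by norm_num)⟩
  rcases le_total s.re 2.5 with h5 | h5
  · have hq := cq4 (s + 1) (by simp; linarith) ht1
    rw [sh2] at hq
    have hm := cq2 s h4 ht
    have hm : ‖chi s‖ ≤ (0.6267 * 0.4999) * ‖chi (s + 2)‖ := by linarith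
    have h3 := (chi_reflect (3 / 2) (by norm_num) s (3 - s) (by linarith) (by push_cast; ring)).trans hm
    have h2 := (chi_reflect 1 (by norm_num) s (2 - s) (by linarith) (by push_cast; ring)).trans hm
    obtain ⟨a, b⟩ := coreI s hσ hτ ht (B := 1.05) hq hm h3 h2 (by norm_num) (by norm_num)
    exact ⟨1.05, by norm_num, a, b, key 1.05 2.5 (by norm_num) h5 (by norm_num)⟩
  norm_num at h5
  have hq := cq5 (s + 1) (by simp; linarith) ht1
  rw [sh2] at hq
  rcases le_total s.re 3 with h6 | h6
  · have hm := cq3 s h5 ht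
    have hm : ‖chi s‖ ≤ (0.5392 * 0.4789) * ‖chi (s + 2)‖ := by linarith
    have h2 := cq1 (s - 1) (by simp; linarith) htm1
    rw [sh0] at h2
    have h2 : ‖chi (s - 1)‖ ≤ (0.8793 * 0.5392 * 0.4789) * ‖chi (s + 2)‖ := by linarith
    have h3 := (chi_reflect 1 (by norm_num) (s - 1) (3 - s) (by simp; linarith) (by push_cast; ring)).trans h2
    rw [← r2eq] at h2
    obtain ⟨a, b⟩ := coreI s hσ hτ ht (B := 0.75) hq hm h3 h2 (by norm_num) (by norm_num)
    exact ⟨0.75, by norm_num, a, b, key 0.75 3 (by norm_num) h6 (by norm_num)⟩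
  rcases le_total s.re 3.5 with h7 | h7
  · have hm := cq4 s h6 ht
    have hm : ‖chi s‖ ≤ (0.4999 * 0.4789) * ‖chi (s + 2)‖ := by linarith
    have h2 := cq2 (s - 1) (by simp; linarith) htm1
    rw [sh0] at h2
    have h2 : ‖chi (s - 1)‖ ≤ (0.6267 * 0.4999 * 0.4789) * ‖chi (s + 2)‖ := by linarith
    have h3 := (chi_reflect 1 (by norm_num) (s - 1) (3 - s) (by simp; linarith) (by push_cast; ring)).trans h2
    rw [← r2eq] at h2
    obtain ⟨a, b⟩ := coreI s hσ hτ ht (B := 0.55) hq hm h3 h2 (by norm_num) (by norm_num)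
    exact ⟨0.55, by norm_num, a, b, key 0.55 3.5 (by norm_num) h7 (by norm_num)⟩
  norm_num at h7
  have hm := cq5 s h7 ht
  have hm : ‖chi s‖ ≤ (0.4789 * 0.4789) * ‖chi (s + 2)‖ := by linarith
  rcases le_total s.re 4 with h8 | h8
  · have h2 := cq3 (s - 1) (by simp; linarith) htm1
    rw [sh0] at h2
    have h2 : ‖chi (s - 1)‖ ≤ (0.5392 * 0.4789 * 0.4789) * ‖chi (s + 2)‖ := by linarith
    have h3 := cq1 (s - 2) (by simp; linarith) htm2
    rw [shm] at h3
    have h3 : ‖chi (s - 2)‖ ≤ (0.8793 * 0.5392 * 0.4789 * 0.4789) * ‖chi (s + 2)‖ := by linarith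
    rw [← r2eq] at h2
    rw [← r3eq] at h3
    obtain ⟨a, b⟩ := coreI s hσ hτ ht (B := 0.42) hq hm h3 h2 (by norm_num) (by norm_num)
    exact ⟨0.42, by norm_num, a, b, key 0.42 4 (by norm_num) h8 (by norm_num)⟩
  · have h2 := cq4 (s - 1) (by simp; linarith) htm1
    rw [sh0] at h2
    have h2 : ‖chi (s - 1)‖ ≤ (0.4999 * 0.4789 * 0.4789) * ‖chi (s + 2)‖ := by linarith
    have h3 := cq2 (s - 2) (by simp; linarith) htm2
    rw [shm] at h3
    have h3 : ‖chi (s - 2)‖ ≤ (0.6267 * 0.4999 * 0.4789 * 0.4789) * ‖chi (s + 2)‖ := by linarith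
    rw [← r2eq] at h2
    rw [← r3eq] at h3
    obtain ⟨a, b⟩ := coreI s hσ hτ ht (B := 0.34) hq hm h3 h2 (by norm_num) (by norm_num)
    exact ⟨0.34, by norm_num, a, b, key 0.34 4.9 (by norm_num) hτ (by norm_num)⟩

theorem farB (s : ℂ) (hσ : 4.9 ≤ s.re) (hτ : s.re ≤ 20) (ht : 36 ≤ |s.im|) :
    ‖f2 (1 - s)‖ < ‖f2 s‖ := by
  norm_num at hσ
  have ht' : 31.6 ≤ |s.im| := le_trans (by norm_num) ht
  have ht1 : 31.6 ≤ |(s + 1).im| := by simpa using ht'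
  have htm1 : 31.6 ≤ |(s - 1).im| := by simpa using ht'
  have htm2 : 31.6 ≤ |(s - 2).im| := by simpa using ht'
  have n2 := norm_nonneg (chi (s + 2))
  have hq := cq5 (s + 1) (by simp; linarith) ht1
  rw [sh2] at hq
  have hm := cq5 s (by linarith) ht'
  have hm : ‖chi s‖ ≤ (0.4789 * 0.4789) * ‖chi (s + 2)‖ := by linarith
  have h2 := cq4 (s - 1) (by simp; linarith) htm1
  rw [sh0] at h2
  have h2 : ‖chi (s - 1)‖ ≤ (0.4999 * 0.4789 * 0.4789) * ‖chi (s + 2)‖ := by linarith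
  have h3 := cq2 (s - 2) (by simp; linarith) htm2
  rw [shm] at h3
  have h3 : ‖chi (s - 2)‖ ≤ (0.6267 * 0.4999 * 0.4789 * 0.4789) * ‖chi (s + 2)‖ := by linarith
  rw [← r2eq] at h2
  rw [← r3eq] at h3
  obtain ⟨a, b, c, d, e⟩ := fudgeII s (by linarith) hτ ht
  obtain ⟨x, y⟩ := core s (by linarith) ht' (B := 0.4) hq hm h3 h2 a b c d e (by norm_num) (by norm_num)
  have := norm_pos_iff.mpr x
  norm_num at y
  linarith

theorem f2_conj {s : ℂ} (h : 0 < s.re) :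
    f2 ((starRingEnd ℂ) s) = (starRingEnd ℂ) (f2 s) := by
  obtain ⟨α, hA, -, -⟩ := A_bd
  have e1 : (starRingEnd ℂ) s + 1 = (starRingEnd ℂ) (s + 1) := by simp
  have e2 : (starRingEnd ℂ) s + 2 = (starRingEnd ℂ) (s + 2) := by simp [map_ofNat]
  have hc : chi ((starRingEnd ℂ) s + 2) = (starRingEnd ℂ) (chi (s + 2)) := by
    rw [e2]; exact chi_conj (by simp; linarith)
  have hc1 : chi ((starRingEnd ℂ) s + 1) = (starRingEnd ℂ) (chi (s + 1)) := by
    rw [e1]; exact chi_conj (by simp; linarith)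
  rw [f2, hc, hc1, chi_conj h, f2, hA]
  simp [map_ofNat]

theorem f2_differentiable : Differentiable ℂ f2 := by
  have := chi_differentiable
  unfold f2
  fun_prop

theorem nearB (s : ℂ) (hσ : 1 / 2 < s.re) (hτ : s.re ≤ 4.9) (ht : 36 ≤ |s.im|) :
    ‖f2 (1 - s)‖ < ‖f2 s‖ := by
  set s0 : ℂ := ⟨1 / 2, s.im⟩ with hs0
  set g : ℂ → ℂ := fun w => f2 (1 - (s0 + w)) / f2 (s0 + w) with hg
  have hre : ∀ w : ℂ, (s0 + w).re = 1 / 2 + w.re := fun w => by simp [hs0]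
  have him : ∀ w : ℂ, ‖w‖ ≤ 4.4 → 31.6 ≤ |(s0 + w).im| := by
    intro w hw
    have h1 := (abs_im_le_norm w).trans hw
    have h2 : (s0 + w).im = s.im + w.im := by simp [hs0]
    rw [h2]
    have h3 := abs_sub_abs_le_abs_add s.im w.im
    norm_num at h1 ⊢
    linarith
  have hup : ∀ w : ℂ, ‖w‖ ≤ 4.4 → (s0 + w).re ≤ 4.9 := by
    intro w hw
    have h1 := (re_le_norm w).trans hw
    rw [hre]; norm_num at h1 ⊢; linarith
  have harc : ∀ w : ℂ, 0 ≤ w.re → ‖w‖ ≤ 4.4 → _ := fun w h0 hw =>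
    arcB (s0 + w) (by rw [hre]; linarith) (hup w hw) (him w hw)
  have H := halfdisc (g := g) (R := 4.4) (M := 1) (by norm_num) (a := 2) (b := 3) le_rfl
    (by
      intro w h0 hw
      obtain ⟨B, hB, hne, -, -⟩ := harc w h0 hw
      have d := f2_differentiable
      have d1 : DifferentiableAt ℂ (fun w => f2 (1 - (s0 + w))) w := by fun_prop
      have d2 : DifferentiableAt ℂ (fun w => f2 (s0 + w)) w := by fun_prop
      exact d1.div d2 hne)
    (by
      intro w h0 hw
      have e : 1 - (s0 + w) = (starRingEnd ℂ) (s0 + w) := by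
        apply Complex.ext
        · simp [hs0, h0]; norm_num
        · simp [hs0]; ring
      simp only [hg]
      rw [e, f2_conj (by rw [hre, h0]; norm_num), norm_div, norm_conj]
      exact div_self_le_one _)
    (by
      intro w h0 hw
      obtain ⟨B, hB, hne, h1, h2⟩ := harc w h0.le hw.le
      have hp := norm_pos_iff.mpr hne
      have hgB : ‖g w‖ ≤ B := by
        simp only [hg, norm_div]
        rw [div_le_iff₀ hp]; exact h1
      have e : 2 * w.re / 4.4 = ((s0 + w).re - 1 / 2) / 2.2 := by rw [hre]; ring
      rw [e]
      have : 0 ≤ ((s0 + w).re - 1 / 2) / 2.2 := by rw [hre]; norm_num; linarith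
      calc _ ≤ B ^ 2 * (((s0 + w).re - 1 / 2) / 2.2) ^ 3 := by gcongr
        _ ≤ 1 := h2)
  set x : ℝ := s.re - 1 / 2 with hx
  have hxp : 0 < x := by linarith
  have hsw : s0 + (x : ℂ) = s := by
    apply Complex.ext <;> simp [hs0, hx]
  have hxn : ‖(x : ℂ)‖ ≤ 4.4 := by
    rw [norm_real, Real.norm_of_nonneg hxp.le]; norm_num at hτ ⊢; linarith
  have h := H (x : ℂ) (by simpa using hxp.le) hxn
  obtain ⟨B, -, hne, -, -⟩ := harc (x : ℂ) (by simpa using hxp.le) hxn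
  simp only [hg] at h
  rw [hsw] at h hne
  have e : (1 + (x : ℂ) ^ 2 / ((4.4 : ℝ) : ℂ) ^ 2) = ((1 + x ^ 2 / 4.4 ^ 2 : ℝ) : ℂ) := by push_cast; rfl
  rw [e, norm_real, Real.norm_of_nonneg (by positivity), norm_div] at h
  have hp := norm_pos_iff.mpr hne
  rw [← div_lt_one hp]
  by_contra hcon
  push Not at hcon
  have h1 : 1 < (1 + x ^ 2 / 4.4 ^ 2) ^ 3 := one_lt_pow₀ (by
    have : 0 < x ^ 2 / 4.4 ^ 2 := by positivity
    linarith) (by norm_num)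
  have h2 : 1 ≤ (‖f2 (1 - s)‖ / ‖f2 s‖) ^ 2 := one_le_pow₀ hcon
  nlinarith

theorem Z2_no_zero_strip (s : ℂ) (h1 : 1 / 2 < s.re) (h2 : s.re < 20) (h3 : 36 ≤ |s.im|) :
    Z2 s ≠ 0 := by
  have hf : ‖f2 (1 - s)‖ < ‖f2 s‖ := by
    rcases le_total s.re 4.9 with h | h
    · exact nearB s h1 h h3
    · exact farB s h h2.le h3
  have hc : ‖chi (2 * s - 1)‖ ≤ ‖chi (2 * s)‖ := by
    rw [← chi_one_sub]
    exact chi_reflect 1 le_rfl (2 * s) _ (by simp; linarith) (by push_cast; ring)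
  have hc0 : 0 < ‖chi (2 * s)‖ := norm_pos_iff.mpr (chi_ne_zero (by simp; linarith))
  intro h
  rw [Z2, sub_eq_zero] at h
  have e := congrArg norm h
  rw [norm_mul, norm_mul] at e
  have a1 : ‖chi (2 * s - 1)‖ * ‖f2 (1 - s)‖ ≤ ‖chi (2 * s)‖ * ‖f2 (1 - s)‖ := by gcongr
  have a2 : ‖chi (2 * s)‖ * ‖f2 (1 - s)‖ < ‖chi (2 * s)‖ * ‖f2 s‖ := by gcongr
  linarith
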